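/- arXiv:2110.09339 — 5 statements merged into one kernel-verified Lean document; each statement's English description precedes it below -/
import Mathlib

section
/- Let K ≥ 2, let v : ℤ → ℝ be a K-periodic real potential, H the discrete Schrödinger operator on ℓ²(ℤ) and H₊ the one-sided discrete Schrödinger operator on ℓ²(ℕ), both with potential v. Then spectrum ℂ H₊ = spectrum ℂ H ∪ { (E : ℂ) | E ∈ ℝ, M(E)₂,₁ = 0 and |M(E)₁,₁| < 1 }, where M(E)ᵢ,ⱼ denotes the (i,j)-entry of the monodromy matrix M(E). -/
/-!
The inclusion of the spectrum of `H` in that of `H₊` comes from restriction operators: cutting a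
two-sided sequence to `[-JK, ∞)` and translating it by `JK` intertwines the two operators up to a
boundary term at site `0` (`sub_restr`), and the boundary term disappears as `J → ∞`. So a lower
bound for `E - H₊` passes to `E - H`, and a self-adjoint operator bounded below is invertible
(`isUnit_sub_H`).

Conversely, let `E` lie outside the spectrum of `H`. Restricting solutions of `(E - H) x = f` to the
half-line shows that `E - H₊` is surjective once it is injective (`isUnit_sub_Hp`). Hence `E` can only
be in the spectrum of `H₊` as an eigenvalue, and the eigenvector is a multiple of the Dirichlet
solution. The Wronskian of that solution and its translate by `K` is the constant `M(E)₂₁`; decay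
forces it to vanish, after which the solution is multiplied by `M(E)₁₁` over each period, so that
`|M(E)₁₁| < 1` (`dirichlet_of_tendsto`). These two conditions conversely make the Dirichlet solution
square summable (`summable_dirSol`). Since both operators are self-adjoint, only real `E` matter.
-/

noncomputable section

open Matrix

/-- The transfer matrix `T(n, E) = !![E - v n, -1; 1, 0]` at energy `E`. -/
def transfer (v : ℤ → ℝ) (E : ℝ) (n : ℤ) : Matrix (Fin 2) (Fin 2) ℝ :=
  !![E - v n, -1; 1, 0]

/-- The monodromy matrix `M(E) = T(K-1, E) ⋯ T(1, E) T(0, E)`. -/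
def monodromyE (v : ℤ → ℝ) (K : ℕ) (E : ℝ) : Matrix (Fin 2) (Fin 2) ℝ :=
  (((List.range K).map fun i => transfer v E (i : ℤ)).reverse).prod

open Filter Topology
open scoped NNReal

/-! ### The Dirichlet solution and the monodromy matrix -/

/-- Solution of the eigenvalue recursion at real energy `E`, with the index shifted by one:
`dirSol v E n` is the value at site `n - 1`, so the Dirichlet data are `dirSol v E 0 = 0` at site
`-1` and `dirSol v E 1 = 1` at site `0`. -/
def dirSol (v : ℤ → ℝ) (E : ℝ) : ℕ → ℝ
  | 0 => 0
  | 1 => 1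
  | n + 2 => (E - v n) * dirSol v E (n + 1) - dirSol v E n

lemma dirSol_rec (v : ℤ → ℝ) (E : ℝ) (n : ℕ) :
    dirSol v E (n + 2) = (E - v n) * dirSol v E (n + 1) - dirSol v E n := by
  rw [dirSol]

lemma monodromyE_eq (v : ℤ → ℝ) (E : ℝ) (n : ℕ) :
    monodromyE v n E 0 0 = dirSol v E (n + 1) ∧ monodromyE v n E 1 0 = dirSol v E n := by
  induction n with
  | zero => simp [monodromyE, dirSol]
  | succ n ih =>
    have h : monodromyE v (n + 1) E = transfer v E n * monodromyE v n E := by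
      simp [monodromyE, List.range_succ]
    rw [h, dirSol_rec, ← ih.1, ← ih.2]
    constructor <;> simp [Matrix.mul_apply, Fin.sum_univ_two, transfer]
    ring

/-- The Wronskian of the Dirichlet solution and its translate by one period is constant. -/
lemma dirSol_wronskian (v : ℤ → ℝ) (E : ℝ) (K : ℕ) (hper : ∀ n : ℤ, v (n + (K : ℤ)) = v n)
    (n : ℕ) : dirSol v E (n + 1) * dirSol v E (n + K) - dirSol v E n * dirSol v E (n + K + 1) =
      dirSol v E K := by
  induction n with
  | zero => simp [dirSol]
  | succ n ih =>
    have h1 := dirSol_rec v E n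
    have h2 := dirSol_rec v E (n + K)
    have h3 := hper n
    push_cast at h2
    rw [h3] at h2
    rw [show n + 1 + K = n + K + 1 by ring, show n + 1 + 1 = n + 2 by ring,
      show n + K + 1 + 1 = n + K + 2 by ring, h1, h2, ← ih]
    ring

lemma dirSol_add_period (v : ℤ → ℝ) (E : ℝ) (K : ℕ) (hper : ∀ n : ℤ, v (n + (K : ℤ)) = v n)
    (h0 : dirSol v E K = 0) (n : ℕ) :
    dirSol v E (n + K) = dirSol v E (K + 1) * dirSol v E n ∧
      dirSol v E (n + 1 + K) = dirSol v E (K + 1) * dirSol v E (n + 1) := by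
  induction n with
  | zero => simp [dirSol, h0, add_comm]
  | succ n ih =>
    refine ⟨ih.2, ?_⟩
    have h2 := dirSol_rec v E (n + K)
    push_cast at h2
    rw [hper n] at h2
    rw [show n + 1 + 1 + K = n + K + 2 by ring, h2, show n + K + 1 = n + 1 + K by ring, ih.1, ih.2,
      dirSol_rec]
    ring

/-- If the Dirichlet solution decays then its Wronskian with the translate vanishes, so
`M(E)₂₁ = 0`; the solution is then multiplied by `M(E)₁₁` over each period, and decay forces
`|M(E)₁₁| < 1`. -/
lemma dirichlet_of_tendsto (v : ℤ → ℝ) (E : ℝ) (K : ℕ) (hK : 0 < K)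
    (hper : ∀ n : ℤ, v (n + (K : ℤ)) = v n)
    (hs : Tendsto (dirSol v E) atTop (𝓝 0)) :
    dirSol v E K = 0 ∧ |dirSol v E (K + 1)| < 1 := by
  have h0 : dirSol v E K = 0 := by
    have hsh : ∀ j : ℕ, Tendsto (fun n => dirSol v E (n + j)) atTop (𝓝 0) := fun j =>
      hs.comp (tendsto_add_atTop_nat j)
    have h := ((hsh 1).mul (hsh K)).sub (hs.mul (hsh (K + 1)))
    simp only [← add_assoc, dirSol_wronskian v E K hper] at h
    simpa using tendsto_nhds_unique tendsto_const_nhds h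
  refine ⟨h0, ?_⟩
  have hpow : ∀ j : ℕ, dirSol v E (j * K + 1) = dirSol v E (K + 1) ^ j := by
    intro j
    induction j with
    | zero => simp [dirSol]
    | succ j ih =>
      rw [show (j + 1) * K + 1 = j * K + 1 + K by ring, (dirSol_add_period v E K hper h0 _).1, ih]
      ring
  have hlim : Tendsto (fun j : ℕ => dirSol v E (K + 1) ^ j) atTop (𝓝 0) := by
    simp only [← hpow]
    refine hs.comp (tendsto_atTop_mono (fun j => ?_) tendsto_id)
    exact (Nat.le_mul_of_pos_right j hK).trans (Nat.le_succ _)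
  exact (tendsto_pow_atTop_nhds_zero_iff).1 hlim

/-- The Dirichlet solution is square summable when it is contracted by `|M(E)₁₁| < 1` over each
period. -/
lemma summable_dirSol (v : ℤ → ℝ) (E : ℝ) (K : ℕ) (hper : ∀ n : ℤ, v (n + (K : ℤ)) = v n)
    (h0 : dirSol v E K = 0) (h1 : |dirSol v E (K + 1)| < 1) :
    Summable fun n => dirSol v E n ^ 2 := by
  set μ := dirSol v E (K + 1) with hμ
  have hμ2 : μ ^ 2 < 1 := by rwa [sq_lt_one_iff_abs_lt_one]
  -- `S (N + K) = S K + μ² S N` for the partial sums `S`, hence `S N ≤ S K / (1 - μ²)`.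
  refine summable_of_sum_range_le (c := (∑ i ∈ Finset.range K, dirSol v E i ^ 2) / (1 - μ ^ 2))
    (fun n => sq_nonneg _) (fun N => ?_)
  rw [le_div_iff₀ (by linarith)]
  have hle : ∑ i ∈ Finset.range N, dirSol v E i ^ 2 ≤ ∑ i ∈ Finset.range (K + N), dirSol v E i ^ 2 :=
    Finset.sum_le_sum_of_subset_of_nonneg (Finset.range_mono (by omega)) fun _ _ _ => sq_nonneg _
  rw [Finset.sum_range_add] at hle
  have : ∑ i ∈ Finset.range N, dirSol v E (K + i) ^ 2 =
      μ ^ 2 * ∑ i ∈ Finset.range N, dirSol v E i ^ 2 := by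
    rw [Finset.mul_sum]
    refine Finset.sum_congr rfl fun i _ => ?_
    rw [add_comm K i, (dirSol_add_period v E K hper h0 i).1, mul_pow]
  rw [this] at hle
  linarith

/-! ### Invertibility of self-adjoint operators -/

/-- A self-adjoint bounded operator that is bounded below is invertible: its range is closed, and
dense because its orthogonal complement is the trivial kernel. -/
lemma isUnit_of_bounded_below {F : Type*} [NormedAddCommGroup F] [InnerProductSpace ℂ F]
    [CompleteSpace F] (A : F →L[ℂ] F) (hA : IsSelfAdjoint A) (C : ℝ≥0)
    (h : ∀ x, ‖x‖ ≤ C * ‖A x‖) : IsUnit A := by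
  have hanti := A.antilipschitz_of_bound h
  rw [ContinuousLinearMap.isUnit_iff_bijective,
    ContinuousLinearMap.bijective_iff_dense_range_and_antilipschitz]
  refine ⟨?_, C, hanti⟩
  rw [Submodule.topologicalClosure_eq_top_iff, ContinuousLinearMap.orthogonal_range,
    hA.adjoint_eq]
  exact LinearMap.ker_eq_bot.2 hanti.injective

lemma bounded_below_of_isUnit {F : Type*} [NormedAddCommGroup F] [NormedSpace ℂ F]
    (A : F →L[ℂ] F) (hA : IsUnit A) : ∃ C : ℝ≥0, ∀ x, ‖x‖ ≤ C * ‖A x‖ := by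
  obtain ⟨B, hB⟩ := hA.exists_left_inv
  refine ⟨‖B‖₊, fun x => ?_⟩
  have : B (A x) = x := by
    simpa using congrArg (fun T : F →L[ℂ] F => T x) hB
  simpa [this] using B.le_opNorm (A x)

/-- An operator on `ℓ²` whose matrix entries are Hermitian is self-adjoint. -/
lemma isSelfAdjoint_of_single {ι : Type*} [DecidableEq ι]
    (A : lp (fun _ : ι => ℂ) 2 →L[ℂ] lp (fun _ : ι => ℂ) 2)
    (h : ∀ (x : lp (fun _ : ι => ℂ) 2) (n : ι), inner ℂ (A (lp.single 2 n 1)) x = A x n) :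
    IsSelfAdjoint A := by
  rw [ContinuousLinearMap.isSelfAdjoint_iff']
  ext x n
  rw [← h, ← ContinuousLinearMap.adjoint_inner_right, lp.inner_single_left]
  simp

/-! ### Passing between the line and the half-line -/

/-- Restriction of a two-sided sequence to the sites `-a, -a + 1, …`, reindexed by `ℕ`. -/
def restr (a : ℤ) (x : lp (fun _ : ℤ => ℂ) 2) : lp (fun _ : ℕ => ℂ) 2 :=
  ⟨fun n => x ((n : ℤ) - a), memℓp_gen <| ((lp.memℓp x).summable (by norm_num)).comp_injective
    (i := fun n : ℕ => (n : ℤ) - a) fun m n h => by simpa using h⟩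

@[simp] lemma restr_apply (a : ℤ) (x : lp (fun _ : ℤ => ℂ) 2) (n : ℕ) :
    restr a x n = x ((n : ℤ) - a) := rfl

lemma norm_restr_le (a : ℤ) (x : lp (fun _ : ℤ => ℂ) 2) : ‖restr a x‖ ≤ ‖x‖ := by
  refine lp.norm_le_of_forall_sum_le (by norm_num) (norm_nonneg _) fun s => ?_
  have := lp.sum_rpow_le_norm_rpow (p := 2) (by norm_num) x
    (s.map ⟨fun n : ℕ => (n : ℤ) - a, fun m n h => by simpa using h⟩)
  rw [Finset.sum_map] at this
  exact this

/-- Extension of a one-sided sequence by zero. -/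
def extZ (y : lp (fun _ : ℕ => ℂ) 2) : lp (fun _ : ℤ => ℂ) 2 :=
  ⟨Function.extend (fun n : ℕ => (n : ℤ)) y 0, memℓp_gen <| by
    have h := (lp.memℓp y).summable (p := 2) (by norm_num)
    refine (Function.Injective.summable_iff (Nat.cast_injective (R := ℤ)) ?_).1 ?_
    · intro n hn
      rw [Function.extend_apply' _ _ _ (by rintro ⟨k, hk⟩; exact hn ⟨k, hk⟩)]
      simp
    · refine h.congr fun n => ?_
      simp [Nat.cast_injective.extend_apply]⟩

@[simp] lemma restr_extZ (y : lp (fun _ : ℕ => ℂ) 2) : restr 0 (extZ y) = y := by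
  ext n
  simp only [restr_apply, sub_zero]
  exact Nat.cast_injective.extend_apply _ _ _

/-! ### The operators `H` and `H₊` -/

section Operators

variable {K : ℕ} {v : ℤ → ℝ}
  {H : lp (fun _ : ℤ => ℂ) 2 →L[ℂ] lp (fun _ : ℤ => ℂ) 2}
  {Hp : lp (fun _ : ℕ => ℂ) 2 →L[ℂ] lp (fun _ : ℕ => ℂ) 2}

lemma isSelfAdjoint_H
    (hH : ∀ x : lp (fun _ : ℤ => ℂ) 2, ∀ n : ℤ,
      H x n = x (n + 1) + x (n - 1) + (v n : ℂ) * x n) : IsSelfAdjoint H := by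
  refine isSelfAdjoint_of_single H fun x n => ?_
  have : H (lp.single 2 n 1) =
      lp.single 2 (n + 1) 1 + lp.single 2 (n - 1) 1 + lp.single 2 n (v n : ℂ) := by
    ext m
    simp only [hH, lp.coeFn_add, Pi.add_apply, lp.single_apply, Pi.single_apply]
    rcases eq_or_ne m n with rfl | hm
    · have h1 : m ≠ m - 1 := by omega
      simp [h1]
    · rw [if_neg hm, if_neg hm, add_comm (if m + 1 = n then (1 : ℂ) else 0)]
      simp only [sub_eq_iff_eq_add, eq_sub_iff_add_eq, mul_zero]
  rw [this, hH, inner_add_left, inner_add_left, lp.inner_single_left, lp.inner_single_left,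
    lp.inner_single_left]
  simp [mul_comm]

lemma isSelfAdjoint_Hp
    (hH0 : ∀ x : lp (fun _ : ℕ => ℂ) 2, Hp x 0 = x 1 + (v 0 : ℂ) * x 0)
    (hHp : ∀ x : lp (fun _ : ℕ => ℂ) 2, ∀ k : ℕ,
      Hp x (k + 1) = x (k + 2) + x k + (v ((k : ℤ) + 1) : ℂ) * x (k + 1)) :
    IsSelfAdjoint Hp := by
  refine isSelfAdjoint_of_single Hp fun x n => ?_
  rcases n with _ | n
  · have : Hp (lp.single 2 0 1) = lp.single 2 1 1 + lp.single 2 0 (v 0 : ℂ) := by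
      ext m
      rcases m with _ | m
      · simp [hH0, lp.single_apply]
      · simp [hHp, lp.single_apply, Pi.single_apply]
    rw [this, hH0, inner_add_left, lp.inner_single_left, lp.inner_single_left]
    simp [mul_comm]
  · have : Hp (lp.single 2 (n + 1) 1) = lp.single 2 (n + 2) 1 + lp.single 2 n 1 +
        lp.single 2 (n + 1) (v ((n : ℤ) + 1) : ℂ) := by
      ext m
      rcases m with _ | m
      · simp [hH0, lp.single_apply, Pi.single_apply, eq_comm]
      · simp only [hHp, lp.coeFn_add, Pi.add_apply, lp.single_apply, Pi.single_apply]
        rcases eq_or_ne m n with rfl | hm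
        · simp
        · have h1 : m + 1 ≠ n + 1 := by omega
          rw [if_neg h1, if_neg h1, add_comm (if m + 2 = n + 1 then (1 : ℂ) else 0)]
          simp only [mul_zero, show m + 2 = n + 1 ↔ m + 1 = n by omega,
            show m + 1 = n + 2 ↔ m = n + 1 by omega]
    rw [this, hHp, inner_add_left, inner_add_left, lp.inner_single_left, lp.inner_single_left,
      lp.inner_single_left]
    simp [mul_comm]

lemma algebraMap_sub_apply {ι : Type*} (z : ℂ)
    (A : lp (fun _ : ι => ℂ) 2 →L[ℂ] lp (fun _ : ι => ℂ) 2)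
    (x : lp (fun _ : ι => ℂ) 2) (n : ι) :
    ((algebraMap ℂ (lp (fun _ : ι => ℂ) 2 →L[ℂ] lp (fun _ : ι => ℂ) 2) z - A) x) n =
      z * x n - A x n := by
  rw [_root_.sub_apply, ContinuousLinearMap.algebraMap_apply]
  rfl

/-- Restriction intertwines `z - H` and `z - H₊` up to a boundary term at site `0`. -/
lemma sub_restr
    (hH : ∀ x : lp (fun _ : ℤ => ℂ) 2, ∀ n : ℤ,
      H x n = x (n + 1) + x (n - 1) + (v n : ℂ) * x n)
    (hH0 : ∀ x : lp (fun _ : ℕ => ℂ) 2, Hp x 0 = x 1 + (v 0 : ℂ) * x 0)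
    (hHp : ∀ x : lp (fun _ : ℕ => ℂ) 2, ∀ k : ℕ,
      Hp x (k + 1) = x (k + 2) + x k + (v ((k : ℤ) + 1) : ℂ) * x (k + 1))
    (a : ℤ) (ha : ∀ n, v (n - a) = v n) (z : ℂ) (x : lp (fun _ : ℤ => ℂ) 2) :
    (algebraMap ℂ _ z - Hp) (restr a x) =
      restr a ((algebraMap ℂ _ z - H) x) + x (-a - 1) • lp.single 2 0 1 := by
  ext n
  rw [lp.coeFn_add, Pi.add_apply, restr_apply, algebraMap_sub_apply, algebraMap_sub_apply,
    lp.coeFn_smul, Pi.smul_apply, lp.single_apply, restr_apply, hH, ha]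
  rcases n with _ | n
  · simp only [hH0, restr_apply, Pi.single_eq_same, smul_eq_mul]
    push_cast
    ring_nf
  · have h1 : n + 1 ≠ 0 := by omega
    simp only [hHp, restr_apply, Pi.single_eq_of_ne h1, smul_eq_mul]
    push_cast
    ring_nf

lemma tendsto_lp_comp {ι : Type*} (x : lp (fun _ : ι => ℂ) 2) (f : ℕ → ι)
    (hf : Function.Injective f) : Tendsto (fun n => x (f n)) atTop (𝓝 0) := by
  have h := (((lp.memℓp x).summable (p := 2) (by norm_num)).comp_injective hf).tendsto_atTop_zero
  rw [tendsto_zero_iff_norm_tendsto_zero]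
  have h2 := h.sqrt
  simpa [Function.comp_def] using h2

/-- Restrictions far enough to the left capture the `ℓ²` mass on any finite set. -/
lemma sum_le_norm_restr (a : ℤ) (x : lp (fun _ : ℤ => ℂ) 2) (s : Finset ℤ)
    (hs : ∀ i ∈ s, 0 ≤ i + a) : ∑ i ∈ s, ‖x i‖ ^ 2 ≤ ‖restr a x‖ ^ 2 := by
  have h := lp.sum_rpow_le_norm_rpow (p := 2) (by norm_num) (restr a x)
    (s.image fun i => (i + a).toNat)
  rw [Finset.sum_image] at h
  · simp only [ENNReal.toReal_ofNat, Real.rpow_ofNat] at h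
    refine le_of_eq_of_le (Finset.sum_congr rfl fun i hi => ?_) h
    rw [restr_apply, Int.toNat_of_nonneg (hs i hi), add_sub_cancel_right]
  · intro i hi j hj hij
    have := hs i hi
    have := hs j hj
    simp only at hij
    omega

lemma isSelfAdjoint_sub {ι : Type*} (A : lp (fun _ : ι => ℂ) 2 →L[ℂ] lp (fun _ : ι => ℂ) 2)
    (hA : IsSelfAdjoint A) (E : ℝ) :
    IsSelfAdjoint
      (algebraMap ℂ (lp (fun _ : ι => ℂ) 2 →L[ℂ] lp (fun _ : ι => ℂ) 2) (E : ℂ) - A) :=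
  (IsSelfAdjoint.algebraMap _ (Complex.conj_ofReal E)).sub hA

/-- Real half-line resolvent points are resolvent points on the line: a bound `‖y‖ ≤ C ‖(E - H₊) y‖` is
applied to restrictions of `x` to `[-JK, ∞)`. As `J → ∞` the boundary term vanishes, which leaves
`‖x‖ ≤ C ‖(E - H) x‖`. -/
lemma isUnit_sub_H (hK : 0 < K) (hper : ∀ n : ℤ, v (n + (K : ℤ)) = v n)
    (hH : ∀ x : lp (fun _ : ℤ => ℂ) 2, ∀ n : ℤ,
      H x n = x (n + 1) + x (n - 1) + (v n : ℂ) * x n)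
    (hH0 : ∀ x : lp (fun _ : ℕ => ℂ) 2, Hp x 0 = x 1 + (v 0 : ℂ) * x 0)
    (hHp : ∀ x : lp (fun _ : ℕ => ℂ) 2, ∀ k : ℕ,
      Hp x (k + 1) = x (k + 2) + x k + (v ((k : ℤ) + 1) : ℂ) * x (k + 1))
    (E : ℝ) (hE : IsUnit (algebraMap ℂ _ (E : ℂ) - Hp)) :
    IsUnit (algebraMap ℂ _ (E : ℂ) - H) := by
  obtain ⟨C, hC⟩ := bounded_below_of_isUnit _ hE
  refine isUnit_of_bounded_below _ (isSelfAdjoint_sub H (isSelfAdjoint_H hH) E) C fun x => ?_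
  set A := algebraMap ℂ (lp (fun _ : ℤ => ℂ) 2 →L[ℂ] lp (fun _ : ℤ => ℂ) 2) (E : ℂ) - H with hA
  have hbound : ∀ J : ℕ, ‖restr ((J : ℤ) * K) x‖ ≤ C * (‖A x‖ + ‖x (-((J : ℤ) * K) - 1)‖) := by
    intro J
    have ha : ∀ n, v (n - (J : ℤ) * K) = v n := fun n =>
      Function.Periodic.sub_nat_mul_eq (show Function.Periodic v (K : ℤ) from hper) J
    refine (hC _).trans (mul_le_mul_of_nonneg_left ?_ C.2)
    rw [sub_restr hH hH0 hHp _ ha]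
    refine (norm_add_le _ _).trans (add_le_add (norm_restr_le _ _) ?_)
    rw [norm_smul, lp.norm_single (by norm_num)]
    simp
  have hlim : Tendsto (fun J : ℕ => ((C : ℝ) * (‖A x‖ + ‖x (-((J : ℤ) * K) - 1)‖)) ^ 2) atTop
      (𝓝 ((C * ‖A x‖) ^ 2)) := by
    have h := (tendsto_lp_comp x (fun J : ℕ => -((J : ℤ) * K) - 1) fun i j h => by
      have hK' : (K : ℤ) ≠ 0 := by omega
      simpa [hK', hK.ne'] using h).norm
    simpa using ((h.const_add ‖A x‖).const_mul (C : ℝ)).pow 2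
  refine lp.norm_le_of_forall_sum_le (by norm_num) (by positivity) fun s => ?_
  simp only [ENNReal.toReal_ofNat, Real.rpow_ofNat]
  refine ge_of_tendsto hlim ?_
  have hev : ∀ᶠ J : ℕ in atTop, ∀ i ∈ s, 0 ≤ i + (J : ℤ) * K := by
    rw [Finset.eventually_all]
    intro i _
    filter_upwards [eventually_ge_atTop i.natAbs] with J hJ
    have h1 : (J : ℤ) ≤ J * K := le_mul_of_one_le_right (by positivity) (by exact_mod_cast hK)
    omega
  filter_upwards [hev] with J hJ
  refine (sum_le_norm_restr _ x s hJ).trans ?_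
  gcongr
  exact hbound J

/-- If the real number `E` is a resolvent point of `H`, the only obstruction to inverting `E - H₊` is an eigenvector.
Restricting `(E - H)⁻¹` of an extension by zero solves the half-line equation up to a multiple of
`δ₀`, and `δ₀` itself is reached from `(E - H)⁻¹ δ₋₁` or `(E - H)⁻¹ δ₋₂`. -/
lemma isUnit_sub_Hp
    (hH : ∀ x : lp (fun _ : ℤ => ℂ) 2, ∀ n : ℤ,
      H x n = x (n + 1) + x (n - 1) + (v n : ℂ) * x n)
    (hH0 : ∀ x : lp (fun _ : ℕ => ℂ) 2, Hp x 0 = x 1 + (v 0 : ℂ) * x 0)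
    (hHp : ∀ x : lp (fun _ : ℕ => ℂ) 2, ∀ k : ℕ,
      Hp x (k + 1) = x (k + 2) + x k + (v ((k : ℤ) + 1) : ℂ) * x (k + 1))
    (E : ℝ) (hE : IsUnit (algebraMap ℂ _ (E : ℂ) - H))
    (hker : ∀ u, (algebraMap ℂ _ (E : ℂ) - Hp) u = 0 → u = 0) :
    IsUnit (algebraMap ℂ _ (E : ℂ) - Hp) := by
  have hsa := isSelfAdjoint_sub H (isSelfAdjoint_H hH) E
  have hAapp := algebraMap_sub_apply (E : ℂ) H
  have hrestr := sub_restr hH hH0 hHp 0 (by simp) (E : ℂ)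
  set A := algebraMap ℂ (lp (fun _ : ℤ => ℂ) 2 →L[ℂ] lp (fun _ : ℤ => ℂ) 2) (E : ℂ) - H
  set B := algebraMap ℂ (lp (fun _ : ℕ => ℂ) 2 →L[ℂ] lp (fun _ : ℕ => ℂ) 2) (E : ℂ) - Hp
  have hAsurj := (ContinuousLinearMap.isUnit_iff_bijective.1 hE).2
  rw [ContinuousLinearMap.isUnit_iff_bijective]
  refine ⟨(injective_iff_map_eq_zero B).2 hker, ?_⟩
  -- A solution of `A x = f` with `f` supported on the negative sites and `x (-1) ≠ 0` yields `δ₀`.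
  have key : ∀ x, restr 0 (A x) = 0 → x (-1) ≠ 0 → ∃ y, B y = lp.single 2 0 1 := by
    intro x hx h1
    refine ⟨(x (-1))⁻¹ • restr 0 x, ?_⟩
    rw [map_smul, hrestr, hx, zero_add, neg_zero, zero_sub, smul_smul, inv_mul_cancel₀ h1, one_smul]
  have hneg : ∀ m : ℤ, m < 0 → restr 0 (lp.single 2 m 1) = 0 := by
    intro m hm
    ext n
    rw [restr_apply, lp.single_apply_ne _ _ _ (by omega)]
    rfl
  have hδ : ∃ y, B y = lp.single 2 0 1 := by
    obtain ⟨g, hg⟩ := hAsurj (lp.single 2 (-1) 1)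
    by_cases hg1 : g (-1) = 0
    · -- Then `g` vanishes on the half-line, the equation at site `-1` forces `g (-2) = -1`, and
      -- symmetry of the Green function transfers this to `h (-1)`.
      have hg0 : g 0 = 0 := by
        have h0 : restr 0 g = 0 := hker _ (by
          rw [hrestr, hg, hneg _ (by norm_num), neg_zero, zero_sub, hg1, zero_smul, zero_add])
        simpa using congrArg (fun y : lp (fun _ : ℕ => ℂ) 2 => y 0) h0
      have hg2 : g (-2) = -1 := by
        have h := hAapp g (-1)
        rw [hg, hH, lp.single_apply_self, hg1] at h
        rw [show (-1 : ℤ) + 1 = 0 by norm_num, show (-1 : ℤ) - 1 = -2 by norm_num, hg0] at h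
        linear_combination h
      obtain ⟨h, hh⟩ := hAsurj (lp.single 2 (-2) 1)
      refine key h (by rw [hh, hneg _ (by norm_num)]) ?_
      have hsymm : inner ℂ (A g) h = inner ℂ g (A h) := by
        rw [← ContinuousLinearMap.adjoint_inner_right, hsa.adjoint_eq]
      rw [hg, hh, lp.inner_single_left, lp.inner_single_right, hg2] at hsymm
      have : h (-1) = -1 := by simpa using hsymm
      simp [this]
    · exact key g (by rw [hg, hneg _ (by norm_num)]) hg1
  obtain ⟨d, hd⟩ := hδ
  intro y
  obtain ⟨x, hx⟩ := hAsurj (extZ y)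
  refine ⟨restr 0 x - x (-1) • d, ?_⟩
  rw [map_sub, map_smul, hd, hrestr, hx, restr_extZ, neg_zero, zero_sub, add_sub_cancel_right]

/-- An `ℓ²(ℕ)` eigenvector of `H₊` is a multiple of the Dirichlet solution. -/
lemma tendsto_dirSol_of_eigenvector
    (hH0 : ∀ x : lp (fun _ : ℕ => ℂ) 2, Hp x 0 = x 1 + (v 0 : ℂ) * x 0)
    (hHp : ∀ x : lp (fun _ : ℕ => ℂ) 2, ∀ k : ℕ,
      Hp x (k + 1) = x (k + 2) + x k + (v ((k : ℤ) + 1) : ℂ) * x (k + 1))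
    (E : ℝ) (u : lp (fun _ : ℕ => ℂ) 2) (hu : (algebraMap ℂ _ (E : ℂ) - Hp) u = 0) (hu0 : u ≠ 0) :
    Tendsto (dirSol v E) atTop (𝓝 0) := by
  have heq : ∀ n, (E : ℂ) * u n = Hp u n := fun n => by
    rw [← sub_eq_zero, ← algebraMap_sub_apply, hu]
    rfl
  have hmul : ∀ n : ℕ, u n = u 0 * dirSol v E (n + 1) ∧ u (n + 1) = u 0 * dirSol v E (n + 2) := by
    intro n
    induction n with
    | zero =>
      have h := heq 0
      rw [hH0] at h
      refine ⟨by simp [dirSol], ?_⟩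
      simp only [dirSol]
      push_cast
      linear_combination -h
    | succ n ih =>
      refine ⟨ih.2, ?_⟩
      have h := heq (n + 1)
      rw [hHp] at h
      rw [dirSol_rec]
      push_cast
      linear_combination -h + (E - (v ((n : ℤ) + 1) : ℂ)) * ih.2 - ih.1
  have h0 : u 0 ≠ 0 := by
    intro h
    refine hu0 (lp.ext (funext fun n => ?_))
    rw [(hmul n).1, h, zero_mul]
    rfl
  have ht := (tendsto_lp_comp u id Function.injective_id).const_mul (u 0)⁻¹
  rw [mul_zero] at ht
  rw [← tendsto_add_atTop_iff_nat 1]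
  have hre : ∀ n : ℕ, ((u 0)⁻¹ * u (id n)).re = dirSol v E (n + 1) := fun n => by
    rw [id, (hmul n).1, inv_mul_cancel_left₀ h0, Complex.ofReal_re]
  simpa only [Function.comp_def, hre, Complex.zero_re] using
    (Complex.continuous_re.tendsto 0).comp ht

/-- A square-summable Dirichlet solution is an eigenvector of `H₊`. -/
lemma exists_eigenvector
    (hH0 : ∀ x : lp (fun _ : ℕ => ℂ) 2, Hp x 0 = x 1 + (v 0 : ℂ) * x 0)
    (hHp : ∀ x : lp (fun _ : ℕ => ℂ) 2, ∀ k : ℕ,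
      Hp x (k + 1) = x (k + 2) + x k + (v ((k : ℤ) + 1) : ℂ) * x (k + 1))
    (E : ℝ) (hs : Summable fun n => dirSol v E n ^ 2) :
    ∃ u : lp (fun _ : ℕ => ℂ) 2, u ≠ 0 ∧ (algebraMap ℂ _ (E : ℂ) - Hp) u = 0 := by
  have hmem : Memℓp (fun n : ℕ => (dirSol v E (n + 1) : ℂ)) 2 := by
    refine memℓp_gen ?_
    simpa using (summable_nat_add_iff 1).2 hs
  have happ : ∀ n : ℕ, (⟨_, hmem⟩ : lp (fun _ : ℕ => ℂ) 2) n = (dirSol v E (n + 1) : ℂ) :=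
    fun _ => rfl
  refine ⟨⟨_, hmem⟩, fun h => ?_, ?_⟩
  · have := happ 0
    rw [h] at this
    simp [dirSol] at this
  · ext n
    rw [algebraMap_sub_apply]
    rcases n with _ | n
    · rw [hH0, happ, happ]
      simp [dirSol]
    · rw [hHp, happ, happ, happ, dirSol_rec v E (n + 1)]
      simp
      ring

end Operators

/-- the spectrum of the one-sided periodic Schrödinger operator `H₊`
is the spectrum of the two-sided operator `H` together with the Dirichlet
eigenvalues, characterised by the entries of the monodromy matrix. -/
theorem stmt12 (K : ℕ) (hK : 2 ≤ K) (v : ℤ → ℝ)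
    (hper : ∀ n : ℤ, v (n + (K : ℤ)) = v n)
    (H : lp (fun _ : ℤ => ℂ) 2 →L[ℂ] lp (fun _ : ℤ => ℂ) 2)
    (hH : ∀ x : lp (fun _ : ℤ => ℂ) 2, ∀ n : ℤ,
      H x n = x (n + 1) + x (n - 1) + (v n : ℂ) * x n)
    (Hp : lp (fun _ : ℕ => ℂ) 2 →L[ℂ] lp (fun _ : ℕ => ℂ) 2)
    (hH0 : ∀ x : lp (fun _ : ℕ => ℂ) 2, Hp x 0 = x 1 + (v 0 : ℂ) * x 0)
    (hHp : ∀ x : lp (fun _ : ℕ => ℂ) 2, ∀ k : ℕ,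
      Hp x (k + 1) = x (k + 2) + x k + (v ((k : ℤ) + 1) : ℂ) * x (k + 1)) :
    spectrum ℂ Hp = spectrum ℂ H ∪
      {z : ℂ | ∃ E : ℝ, z = (E : ℂ) ∧
        monodromyE v K E 1 0 = 0 ∧ |monodromyE v K E 0 0| < 1} := by
  have hK0 : 0 < K := by omega
  have hM := fun E => monodromyE_eq v E K
  ext z
  constructor
  · intro hz
    have hzr := (isSelfAdjoint_Hp hH0 hHp).mem_spectrum_eq_re hz
    refine or_iff_not_imp_left.2 fun hzH => ⟨z.re, hzr, ?_⟩
    rw [hzr] at hz hzH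
    rw [spectrum.mem_iff] at hz
    rw [spectrum.mem_iff, not_not] at hzH
    have hex : ∃ u, (algebraMap ℂ _ (z.re : ℂ) - Hp) u = 0 ∧ u ≠ 0 := by
      by_contra! hcon
      exact hz (isUnit_sub_Hp hH hH0 hHp z.re hzH hcon)
    obtain ⟨u, hu, hu0⟩ := hex
    rw [(hM _).1, (hM _).2]
    exact dirichlet_of_tendsto v z.re K hK0 hper
      (tendsto_dirSol_of_eigenvector hH0 hHp z.re u hu hu0)
  · rintro (hz | ⟨E, rfl, h0, h1⟩)
    · have hzr := (isSelfAdjoint_H hH).mem_spectrum_eq_re hz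
      rw [hzr, spectrum.mem_iff] at hz ⊢
      exact fun h => hz (isUnit_sub_H hK0 hper hH hH0 hHp z.re h)
    · rw [(hM E).2] at h0
      rw [(hM E).1] at h1
      obtain ⟨u, hu0, hu⟩ := exists_eigenvector hH0 hHp E (summable_dirSol v E K hper h0 h1)
      rw [spectrum.mem_iff]
      intro h
      exact hu0 ((ContinuousLinearMap.isUnit_iff_bijective.1 h).1 (hu.trans (map_zero _).symm))
end
end

section
/- Let K ≥ 2, v : ℤ → ℝ, E ∈ ℝ, and let M(E) := T(K−1,E)·⋯·T(1,E)·T(0,E) with T(n,E) := !![E − v(n), −1; 1, 0]. For integers 0 ≤ a ≤ b ≤ K−1, let J_{a..b} denote the (b−a+1)×(b−a+1) real tridiagonal matrix with diagonal entries v(a), v(a+1), …, v(b) and entries 1 on the first sub- and superdiagonal (with the convention det(J_{a..b} − E·I) = 1 when a > b, i.e. for the empty matrix). Then M(E) = (−1)^{K+1} · !![ −det(J_{0..K−1} − E·I), −det(J_{1..K−1} − E·I); det(J_{0..K−2} − E·I), det(J_{1..K−2} − E·I) ]. -/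
/-!
Peeling the factor `T(0, E)` off the right of the monodromy matrix leaves the monodromy matrix of
the shifted potential `n ↦ v (n + 1)`. On the determinant side, cofactor expansion along the first
row gives the continuant recurrence
`det (J_{a..b} - E) = (v a - E) det (J_{a+1..b} - E) - det (J_{a+2..b} - E)` (`jacobiDet_succ_succ`).
The two recursions agree entry by entry, so induction on `K`, for all potentials at once, proves the
formula.
-/

noncomputable section

open Matrix

/-- The `m × m` tridiagonal Jacobi matrix `J_{a..a+m-1}` with diagonal entries
`v a, v (a+1), …, v (a+m-1)` and entries `1` on the first sub- and superdiagonal. -/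
def jacobiMat (v : ℤ → ℝ) (a : ℤ) (m : ℕ) : Matrix (Fin m) (Fin m) ℝ :=
  Matrix.of fun i j =>
    if (i : ℕ) = (j : ℕ) then v (a + (i : ℕ))
    else if (i : ℕ) = (j : ℕ) + 1 ∨ (j : ℕ) = (i : ℕ) + 1 then 1 else 0

/-- The characteristic determinant `det (J_{a..a+m-1} - E·I)`. -/
def jacobiDet (v : ℤ → ℝ) (E : ℝ) (a : ℤ) (m : ℕ) : ℝ :=
  (jacobiMat v a m - E • (1 : Matrix (Fin m) (Fin m) ℝ)).det

theorem jacobiShift_apply (v : ℤ → ℝ) (E : ℝ) (a : ℤ) (m : ℕ) (i j : Fin m) :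
    (jacobiMat v a m - E • (1 : Matrix (Fin m) (Fin m) ℝ)) i j =
      if (i : ℕ) = (j : ℕ) then v (a + (i : ℕ)) - E
      else if (i : ℕ) = (j : ℕ) + 1 ∨ (j : ℕ) = (i : ℕ) + 1 then 1 else 0 := by
  by_cases h : (i : ℕ) = (j : ℕ) <;> simp [jacobiMat, Matrix.one_apply, Fin.ext_iff, h]

theorem jacobiDet_zero (v : ℤ → ℝ) (E : ℝ) (a : ℤ) : jacobiDet v E a 0 = 1 := by
  simp [jacobiDet]

theorem jacobiDet_one (v : ℤ → ℝ) (E : ℝ) (a : ℤ) : jacobiDet v E a 1 = v a - E := by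
  rw [jacobiDet, Matrix.det_fin_one, jacobiShift_apply]
  simp

/-- Deleting the first row and column of `J_{a..b} - E·I` gives `J_{a+1..b} - E·I`. -/
theorem jacobiShift_submatrix (v : ℤ → ℝ) (E : ℝ) (a : ℤ) (m : ℕ) :
    (jacobiMat v a (m + 1) - E • (1 : Matrix (Fin (m + 1)) (Fin (m + 1)) ℝ)).submatrix
      Fin.succ Fin.succ = jacobiMat v (a + 1) m - E • (1 : Matrix (Fin m) (Fin m) ℝ) := by
  ext i j
  rw [Matrix.submatrix_apply, jacobiShift_apply, jacobiShift_apply]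
  simp only [Fin.val_succ, add_left_inj, Nat.cast_add, Nat.cast_one]
  rw [show a + ((i : ℕ) + 1 : ℤ) = a + 1 + (i : ℕ) by ring]

/-- The continuant recurrence, by expansion along the first row. -/
theorem jacobiDet_succ_succ (v : ℤ → ℝ) (E : ℝ) (a : ℤ) (m : ℕ) :
    jacobiDet v E a (m + 2) =
      (v a - E) * jacobiDet v E (a + 1) (m + 1) - jacobiDet v E (a + 2) m := by
  have hdiag := jacobiShift_submatrix v E a (m + 1)
  have hdiag' := jacobiShift_submatrix v E (a + 1) m
  have hA := jacobiShift_apply v E a (m + 2)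
  unfold jacobiDet
  rw [show a + 2 = a + 1 + 1 by ring, ← hdiag', ← hdiag]
  generalize jacobiMat v a (m + 2) - E • (1 : Matrix (Fin (m + 2)) (Fin (m + 2)) ℝ) = A at hA ⊢
  -- The minor at `(0, 1)` has first column `(1, 0, …, 0)`: expand it along that column.
  have hminor : (A.submatrix Fin.succ (Fin.succAbove 1)).det =
      ((A.submatrix Fin.succ Fin.succ).submatrix Fin.succ Fin.succ).det := by
    rw [Matrix.det_succ_column_zero, Fin.sum_univ_succ, Finset.sum_eq_zero]
    · have h1 : (Fin.succAbove (1 : Fin (m + 2))) ∘ Fin.succ = Fin.succ ∘ Fin.succ := by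
        funext i
        exact Fin.succ_succAbove_succ (0 : Fin (m + 1)) i
      simp [hA, Matrix.submatrix_submatrix, h1]
    · intro i _
      simp [hA]
  rw [Matrix.det_succ_row_zero, Fin.sum_univ_succ, Fin.sum_univ_succ, Finset.sum_eq_zero]
  · have h0 : (Fin.succAbove (0 : Fin (m + 2))) = Fin.succ := by
      funext i
      simp
    rw [Fin.succ_zero_eq_one, hminor, h0]
    simp [hA]
    ring
  · intro j _
    simp [hA]

theorem jacobiDet_shift (v : ℤ → ℝ) (E : ℝ) (a : ℤ) (m : ℕ) :
    jacobiDet (fun n => v (n + 1)) E a m = jacobiDet v E (a + 1) m := by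
  unfold jacobiDet jacobiMat
  simp only [add_right_comm]

theorem monodromyE_succ (v : ℤ → ℝ) (K : ℕ) (E : ℝ) :
    monodromyE v (K + 1) E = monodromyE (fun n => v (n + 1)) K E * transfer v E 0 := by
  simp [monodromyE, List.range_succ_eq_map, transfer, List.map_flatMap, List.flatMap_map]

theorem monodromyE_eq_jacobiDet (n : ℕ) (v : ℤ → ℝ) (E : ℝ) :
    monodromyE v (n + 2) E = ((-1 : ℝ)) ^ (n + 3) •
      !![ -jacobiDet v E 0 (n + 2), -jacobiDet v E 1 (n + 1);
          jacobiDet v E 0 (n + 1), jacobiDet v E 1 n ] := by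
  induction n generalizing v with
  | zero =>
    rw [monodromyE_succ, monodromyE_succ, jacobiDet_succ_succ]
    ext i j
    fin_cases i <;> fin_cases j <;>
      simp [monodromyE, transfer, jacobiDet_zero, jacobiDet_one, Matrix.mul_apply] <;> ring
  | succ n ih =>
    rw [monodromyE_succ, ih]
    simp only [jacobiDet_shift]
    rw [jacobiDet_succ_succ v E 0 (n + 1), jacobiDet_succ_succ v E 0 n]
    ext i j
    fin_cases i <;> fin_cases j <;>
      simp [transfer, Matrix.mul_apply, pow_succ] <;> ring_nf

/-- the entries of the monodromy matrix `M(E)` are, up to sign,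
determinants of the finite Jacobi sections `J_{a..b} - E·I`. -/
theorem stmt13 (K : ℕ) (hK : 2 ≤ K) (v : ℤ → ℝ) (E : ℝ) :
    monodromyE v K E = ((-1 : ℝ)) ^ (K + 1) •
      !![ -(jacobiMat v 0 K - E • (1 : Matrix (Fin K) (Fin K) ℝ)).det,
          -(jacobiMat v 1 (K - 1) - E • (1 : Matrix (Fin (K - 1)) (Fin (K - 1)) ℝ)).det;
          (jacobiMat v 0 (K - 1) - E • (1 : Matrix (Fin (K - 1)) (Fin (K - 1)) ℝ)).det,
          (jacobiMat v 1 (K - 2) - E • (1 : Matrix (Fin (K - 2)) (Fin (K - 2)) ℝ)).det ] := by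
  obtain ⟨n, rfl⟩ := Nat.exists_eq_add_of_le' hK
  exact monodromyE_eq_jacobiDet n v E
end
end

section
/- Let K ≥ 1, let v : ℤ → ℝ be a K-periodic real potential with monodromy matrix M := T(K−1)·⋯·T(1)·T(0), and assume |tr(M)| > 2. Then the following are equivalent: (i) there exists a nonzero bounded function x : ℕ → ℂ satisfying the Dirichlet recursion x(1) + v(0)·x(0) = 0 and x(k+1) + x(k−1) + v(k)·x(k) = 0 for all k ≥ 1; (ii) the vector (1,0)ᵀ is an eigenvector of M for the eigenvalue M₁,₁ with |M₁,₁| < 1; (iii) M₂,₁ = 0 and |M₁,₁| < 1. -/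
/-!
The partial products `P n = T(n-1) ⋯ T(0)` have first column `(a n, a (n-1))`, where `a` is the
Dirichlet solution with `a 0 = 1`; every solution of the Dirichlet recursion is `x 0 • a`, so a
nonzero bounded one exists iff `a` is bounded.  Periodicity gives `P (n + K) = P n * M`.

If `M 1 0 = 0`, this reads `a (n + K) = M 0 0 * a n` on first columns, and `|M 0 0| < 1` makes `a`
bounded (`bounded_of_shift`).

Conversely, since `det M = 1`, Cayley–Hamilton shows that both entries of the first column of
`P (j * K) = M ^ j` satisfy `u (j + 2) = tr M * u (j + 1) - u j`.  As `|tr M| > 2`, the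
characteristic roots are real with `|l| < 1 < |m|`, and a bounded solution has no component along
`m ^ j`, so `u 1 = l * u 0` (`eq_of_bounded_rec`).  For the two entries this says `M 0 0 = l` and
`M 1 0 = 0`.
-/

noncomputable section

open Matrix

/-- The transfer matrix at energy `0`: `T(n) = !![-v n, -1; 1, 0]`. -/
def transfer0 (v : ℤ → ℝ) (n : ℤ) : Matrix (Fin 2) (Fin 2) ℝ :=
  !![-v n, -1; 1, 0]

/-- The monodromy matrix `M = T(K-1) ⋯ T(1) T(0)` at energy `0`. -/
def monodromy0 (v : ℤ → ℝ) (K : ℕ) : Matrix (Fin 2) (Fin 2) ℝ :=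
  (((List.range K).map fun i => transfer0 v (i : ℤ)).reverse).prod

lemma monodromy0_zero (v : ℤ → ℝ) : monodromy0 v 0 = 1 := by
  simp [monodromy0]

lemma monodromy0_succ (v : ℤ → ℝ) (n : ℕ) :
    monodromy0 v (n + 1) = transfer0 v n * monodromy0 v n := by
  simp [monodromy0, List.range_succ]

lemma monodromy0_det (v : ℤ → ℝ) (n : ℕ) : (monodromy0 v n).det = 1 := by
  induction n with
  | zero => simp [monodromy0_zero]
  | succ n ih =>
    rw [monodromy0_succ, Matrix.det_mul, ih]
    simp [transfer0, Matrix.det_fin_two]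

lemma monodromy0_add (v : ℤ → ℝ) (K : ℕ) (hper : ∀ n : ℤ, v (n + (K : ℤ)) = v n) (n : ℕ) :
    monodromy0 v (n + K) = monodromy0 v n * monodromy0 v K := by
  induction n with
  | zero => simp [monodromy0_zero]
  | succ n ih =>
    rw [Nat.add_right_comm, monodromy0_succ, ih, monodromy0_succ, Matrix.mul_assoc]
    simp [transfer0, hper]

lemma monodromy0_succ_zero_zero (v : ℤ → ℝ) (n : ℕ) :
    monodromy0 v (n + 1) 0 0 = -v n * monodromy0 v n 0 0 - monodromy0 v n 1 0 := by
  simp [monodromy0_succ, transfer0, Matrix.mul_apply, Fin.sum_univ_two]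
  ring

lemma monodromy0_succ_one_zero (v : ℤ → ℝ) (n : ℕ) :
    monodromy0 v (n + 1) 1 0 = monodromy0 v n 0 0 := by
  simp [monodromy0_succ, transfer0, Matrix.mul_apply, Fin.sum_univ_two]

/-- The `(0, 0)` entries of the partial products solve the Schrödinger recursion. -/
lemma monodromy0_rec (v : ℤ → ℝ) (n : ℕ) :
    monodromy0 v (n + 2) 0 0
      = -v ((n : ℤ) + 1) * monodromy0 v (n + 1) 0 0 - monodromy0 v n 0 0 := by
  rw [monodromy0_succ_zero_zero, monodromy0_succ_one_zero]
  push_cast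
  rfl

lemma monodromy0_one (v : ℤ → ℝ) : monodromy0 v 1 0 0 = -v 0 := by
  have h := monodromy0_succ_zero_zero v 0
  simpa [monodromy0_zero] using h

/-- A solution of the Dirichlet recursion is determined by its value at `0`. -/
lemma dirichlet_eq (v : ℤ → ℝ) (x : ℕ → ℂ) (h0 : x 1 + (v 0 : ℂ) * x 0 = 0)
    (h : ∀ k : ℕ, x (k + 2) + x k + (v ((k : ℤ) + 1) : ℂ) * x (k + 1) = 0) (n : ℕ) :
    x n = x 0 * (monodromy0 v n 0 0 : ℂ) := by
  induction n using Nat.twoStepInduction with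
  | zero => simp [monodromy0_zero]
  | one =>
    rw [monodromy0_one]
    push_cast
    linear_combination h0
  | more n ih1 ih2 =>
    rw [monodromy0_rec]
    push_cast
    linear_combination h n - ih1 - (v ((n : ℤ) + 1) : ℂ) * ih2

/-- Cayley–Hamilton for the powers `monodromy0 v (j * K)` of the monodromy matrix. -/
lemma monodromy0_cayley (v : ℤ → ℝ) (K : ℕ) (hper : ∀ n : ℤ, v (n + (K : ℤ)) = v n) (j : ℕ)
    (i : Fin 2) :
    monodromy0 v ((j + 2) * K) i 0 = (monodromy0 v K).trace * monodromy0 v ((j + 1) * K) i 0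
      - monodromy0 v (j * K) i 0 := by
  have e2 : (j + 2) * K = j * K + K + K := by ring
  have e1 : (j + 1) * K = j * K + K := by ring
  have hd := monodromy0_det v K
  rw [Matrix.det_fin_two] at hd
  rw [e2, e1, monodromy0_add v K hper (j * K + K), monodromy0_add v K hper (j * K)]
  simp only [Matrix.mul_apply, Fin.sum_univ_two, Matrix.trace_fin_two]
  linear_combination (-monodromy0 v (j * K) i 0) * hd

/-- The characteristic roots in the hyperbolic case. -/
lemma exists_roots (t : ℝ) (ht : 2 < |t|) : ∃ l m : ℝ, l + m = t ∧ l * m = 1 ∧ 1 < |m| := by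
  have hs : Real.sqrt (t ^ 2 - 4) ^ 2 = t ^ 2 - 4 := Real.sq_sqrt (by
    rw [← sq_abs]; nlinarith)
  have hs0 := Real.sqrt_nonneg (t ^ 2 - 4)
  -- The sign of the root is chosen so that `m` is at least `|t| / 2` in absolute value.
  rcases lt_abs.1 ht with h | h
  · refine ⟨(t - Real.sqrt (t ^ 2 - 4)) / 2, (t + Real.sqrt (t ^ 2 - 4)) / 2, by ring,
      by linear_combination (-1 / 4) * hs, lt_abs.2 (Or.inl (by linarith))⟩
  · refine ⟨(t + Real.sqrt (t ^ 2 - 4)) / 2, (t - Real.sqrt (t ^ 2 - 4)) / 2, by ring,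
      by linear_combination (-1 / 4) * hs, lt_abs.2 (Or.inr (by linarith))⟩

/-- A bounded solution of the recursion with characteristic roots `l`, `m`, where `1 < |m|`, has
no component along `m ^ j`. -/
lemma eq_of_bounded_rec (u : ℕ → ℝ) (l m C : ℝ) (hlm : l * m = 1) (hm : 1 < |m|)
    (hu : ∀ j, u (j + 2) = (l + m) * u (j + 1) - u j) (hC : ∀ j, |u j| ≤ C) :
    u 1 = l * u 0 := by
  have key : ∀ j, u (j + 1) - l * u j = m ^ j * (u 1 - l * u 0) := by
    intro j
    induction j with
    | zero => simp
    | succ j ih =>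
      rw [hu, pow_succ]
      linear_combination m * ih + u j * hlm
  by_contra hne
  have hpos : 0 < |u 1 - l * u 0| := abs_pos.2 (sub_ne_zero.2 hne)
  obtain ⟨j, hj⟩ := pow_unbounded_of_one_lt ((C + |l| * C) / |u 1 - l * u 0|) hm
  rw [div_lt_iff₀ hpos, ← abs_pow, ← abs_mul, ← key] at hj
  have h1 : |u (j + 1) - l * u j| ≤ |u (j + 1)| + |l| * |u j| := by
    rw [← abs_mul]; exact abs_sub _ _
  have h2 := mul_le_mul_of_nonneg_left (hC j) (abs_nonneg l)
  linarith [hC (j + 1)]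

lemma bounded_of_shift (a : ℕ → ℝ) (K : ℕ) (hK : 1 ≤ K) (c : ℝ) (hc : |c| < 1)
    (h : ∀ n, a (n + K) = a n * c) (n : ℕ) : |a n| ≤ ∑ i ∈ Finset.range K, |a i| := by
  induction n using Nat.strong_induction_on with
  | _ n ih =>
    rcases lt_or_ge n K with hn | hn
    · exact Finset.single_le_sum (f := fun i => |a i|) (fun i _ => abs_nonneg _)
        (Finset.mem_range.2 hn)
    · obtain ⟨r, rfl⟩ := Nat.exists_eq_add_of_le' hn
      rw [h, abs_mul]
      exact (mul_le_of_le_one_right (abs_nonneg _) hc.le).trans (ih r (by omega))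

/-- for an invertible `K`-periodic Schrödinger operator (trace
condition `|tr M| > 2`), non-injectivity of the one-sided compression `H₊` on the
bounded sequences is characterised via the monodromy matrix `M`. -/
theorem stmt14 (K : ℕ) (hK : 1 ≤ K) (v : ℤ → ℝ)
    (hper : ∀ n : ℤ, v (n + (K : ℤ)) = v n)
    (htr : 2 < |Matrix.trace (monodromy0 v K)|) :
    List.TFAE
      [ ∃ x : ℕ → ℂ, x ≠ 0 ∧ (∃ C : ℝ, ∀ k : ℕ, ‖x k‖ ≤ C) ∧
          x 1 + (v 0 : ℂ) * x 0 = 0 ∧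
          ∀ k : ℕ, x (k + 2) + x k + (v ((k : ℤ) + 1) : ℂ) * x (k + 1) = 0,
        (monodromy0 v K).mulVec ![1, 0] = monodromy0 v K 0 0 • ![1, 0] ∧
          |monodromy0 v K 0 0| < 1,
        monodromy0 v K 1 0 = 0 ∧ |monodromy0 v K 0 0| < 1 ] := by
  tfae_have 2 ↔ 3 := by
    refine and_congr_left fun _ => ⟨fun h => ?_, fun h => ?_⟩
    · simpa [Matrix.mulVec, dotProduct, Fin.sum_univ_two] using congrFun h 1
    · ext i
      fin_cases i <;> simp [Matrix.mulVec, dotProduct, Fin.sum_univ_two, h]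
  tfae_have 3 → 1 := by
    rintro ⟨h10, h00⟩
    have hb := bounded_of_shift (fun n => monodromy0 v n 0 0) K hK _ h00 (fun n => by
      simp [monodromy0_add v K hper, Matrix.mul_apply, Fin.sum_univ_two, h10])
    refine ⟨fun n => (monodromy0 v n 0 0 : ℂ), fun h => ?_, ⟨∑ i ∈ Finset.range K, |monodromy0 v i 0 0|, fun k => ?_⟩, ?_,
      fun k => ?_⟩
    · simpa [monodromy0_zero] using congrFun h 0
    · rw [Complex.norm_real, Real.norm_eq_abs]
      exact hb k
    · simp [monodromy0_one, monodromy0_zero]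
    · simp only [monodromy0_rec]
      push_cast
      ring
  tfae_have 1 → 3 := by
    rintro ⟨x, hx, ⟨C, hC⟩, h0, hrec⟩
    have hsol := dirichlet_eq v x h0 hrec
    have hx0 : x 0 ≠ 0 := fun h => hx (funext fun n => by rw [hsol n, h]; simp)
    have hpos : 0 < ‖x 0‖ := norm_pos_iff.2 hx0
    have ha : ∀ n, |monodromy0 v n 0 0| ≤ C / ‖x 0‖ := fun n => by
      rw [le_div_iff₀' hpos, ← Real.norm_eq_abs, ← Complex.norm_real, ← norm_mul, ← hsol n]
      exact hC n
    have hb : ∀ n, |monodromy0 v n 1 0| ≤ C / ‖x 0‖ := fun n => by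
      cases n with
      | zero => simpa [monodromy0_zero] using (abs_nonneg _).trans (ha 0)
      | succ n => rw [monodromy0_succ_one_zero]; exact ha n
    obtain ⟨l, m, hsum, hlm, hm⟩ := exists_roots _ htr
    have e0 := eq_of_bounded_rec (fun j => monodromy0 v (j * K) 0 0) l m _ hlm hm
      (fun j => by rw [hsum]; exact monodromy0_cayley v K hper j 0) (fun j => ha _)
    have e1 := eq_of_bounded_rec (fun j => monodromy0 v (j * K) 1 0) l m _ hlm hm
      (fun j => by rw [hsum]; exact monodromy0_cayley v K hper j 1) (fun j => hb _)
    simp only [one_mul, zero_mul, monodromy0_zero, Matrix.one_apply_eq, mul_one] at e0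
    simp only [one_mul, zero_mul, monodromy0_zero] at e1
    refine ⟨by simpa using e1, ?_⟩
    rw [e0]
    have h1 : |l| * |m| = 1 := by rw [← abs_mul, hlm, abs_one]
    nlinarith [abs_nonneg l]
  tfae_finish
end
end

section
/- Let ω ∈ ℕ and let a : ℤ → ℤ → ℂ be bounded with a(i,j) = 0 whenever |i − j| > ω (a banded matrix). Let p, q be extended-real exponents with 1 ≤ p, q ≤ ∞, and suppose A : ℓ^p(ℤ) → ℓ^p(ℤ) and B : ℓ^q(ℤ) → ℓ^q(ℤ) are continuous linear operators both given entrywise by a, i.e. (A x)(i) = ∑_{j : |i−j| ≤ ω} a(i,j)·x(j) for all x ∈ ℓ^p(ℤ) and i ∈ ℤ, and likewise for B on ℓ^q(ℤ). If A is bijective, then B is bijective. -/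
/-!
The proof passes through a matrix `G` representing the inverse of `A`, and shows that `G` inverts
the band matrix `a` on every `ℓ^q(ℤ)` at once.

The point is that the columns `A⁻¹ eₙ` decay exponentially away from `n`, uniformly in `n`
(`exists_decay`). Conjugating `A` by the weight `exp (-ε |k - n|)` changes each entry in the band
by at most a factor `exp (± ε ω)`, so for small `ε` the result is a perturbation of `A` of norm
at most `1 / (2 ‖A⁻¹‖)`, with bounds independent of `n`; it is therefore still onto with uniformly
bounded preimages (`exists_perturb`), and undoing the conjugation gives the decay. Evaluating the
inverse only at the unit vectors `eₙ` makes the argument valid for `p = ∞` as well, where these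
vectors do not span a dense subspace.

The matrix `G k n = (A⁻¹ eₙ) k` satisfies `a G = 1` and `G a = 1` entrywise, all sums being finite
(`exists_green`). Its diagonals act on `ℓ^q` with summable norms, so `G` acts boundedly on `ℓ^q`,
and `a G = 1` gives surjectivity of `B`. Since the rows of `G` are summable and elements of `ℓ^q`
are bounded, `G (a x) = x` for all `x` in `ℓ^q`, which gives injectivity.
-/

noncomputable section

/-- The sequence space `ℓ^p(ℤ)`. -/
abbrev Lz (p : ENNReal) := lp (fun _ : ℤ => ℂ) p

/-- A sequence dominated by `K` times a translate of `x ∈ ℓ^p(ℤ)` lies in `ℓ^p(ℤ)`, with norm at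
most `K ‖x‖`. -/
theorem memℓp_shift {p : ENNReal} [Fact (1 ≤ p)] (x : Lz p) (m : ℤ) (f : ℤ → ℂ) (K : ℝ)
    (hK : 0 ≤ K) (hf : ∀ i, ‖f i‖ ≤ K * ‖x (i + m)‖) :
    ∃ h : Memℓp f p, ‖(⟨f, h⟩ : Lz p)‖ ≤ K * ‖x‖ := by
  have hp0 : p ≠ 0 := (zero_lt_one.trans_le (Fact.out : 1 ≤ p)).ne'
  by_cases hp : p = ⊤
  · subst hp
    have hb : ∀ i, ‖f i‖ ≤ K * ‖x‖ := fun i => (hf i).trans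
      (mul_le_mul_of_nonneg_left (lp.norm_apply_le_norm hp0 x _) hK)
    have h : Memℓp f ⊤ := memℓp_infty ⟨K * ‖x‖, by rintro _ ⟨i, rfl⟩; exact hb i⟩
    exact ⟨h, lp.norm_le_of_forall_le (by positivity) hb⟩
  · have hpr : 0 < p.toReal := ENNReal.toReal_pos hp0 hp
    have hs : ∀ s : Finset ℤ, ∑ i ∈ s, ‖f i‖ ^ p.toReal ≤ (K * ‖x‖) ^ p.toReal := by
      intro s
      calc ∑ i ∈ s, ‖f i‖ ^ p.toReal
          ≤ ∑ i ∈ s, K ^ p.toReal * ‖x (i + m)‖ ^ p.toReal := by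
            refine Finset.sum_le_sum fun i _ => ?_
            rw [← Real.mul_rpow hK (norm_nonneg _)]
            exact Real.rpow_le_rpow (norm_nonneg _) (hf i) hpr.le
        _ = K ^ p.toReal * ∑ j ∈ s.map (Equiv.addRight m).toEmbedding, ‖x j‖ ^ p.toReal := by
            rw [← Finset.mul_sum, Finset.sum_map]; rfl
        _ ≤ K ^ p.toReal * ‖x‖ ^ p.toReal := by
            gcongr
            exact lp.sum_rpow_le_norm_rpow hpr x _
        _ = _ := (Real.mul_rpow hK (norm_nonneg _)).symm
    exact ⟨memℓp_gen' hs, lp.norm_le_of_forall_sum_le hpr (by positivity) hs⟩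

/-- A single bounded diagonal acts boundedly on every `ℓ^p(ℤ)`, with norm at most any bound
on its entries. -/
theorem exists_diag (p : ENNReal) [Fact (1 ≤ p)] (m : ℤ) (c : ℤ → ℂ) (K : ℝ)
    (hc : ∀ i, ‖c i‖ ≤ K) :
    ∃ T : Lz p →L[ℂ] Lz p, ‖T‖ ≤ K ∧ ∀ x i, T x i = c i * x (i + m) := by
  have hK : 0 ≤ K := (norm_nonneg _).trans (hc 0)
  have key : ∀ x : Lz p, ∃ h : Memℓp (fun i => c i * x (i + m)) p,
      ‖(⟨fun i => c i * x (i + m), h⟩ : Lz p)‖ ≤ K * ‖x‖ := fun x =>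
    memℓp_shift x m _ K hK fun i => by
      rw [norm_mul]; exact mul_le_mul_of_nonneg_right (hc i) (norm_nonneg _)
  let L : Lz p →ₗ[ℂ] Lz p :=
    { toFun := fun x => ⟨fun i => c i * x (i + m), (key x).1⟩
      map_add' := fun x y => by
        ext i
        change c i * (x + y : Lz p) (i + m) = c i * x (i + m) + c i * y (i + m)
        rw [lp.coeFn_add, Pi.add_apply, mul_add]
      map_smul' := fun r x => by
        ext i
        change c i * (r • x : Lz p) (i + m) = r * (c i * x (i + m))
        rw [lp.coeFn_smul, Pi.smul_apply, smul_eq_mul]; ring }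
  exact ⟨L.mkContinuous K fun x => (key x).2, L.mkContinuous_norm_le hK _, fun x i => rfl⟩

theorem sum_Icc_shift (ω : ℕ) (i : ℤ) (f : ℤ → ℂ) :
    ∑ j ∈ Finset.Icc (i - (ω : ℤ)) (i + (ω : ℤ)), f j
      = ∑ m ∈ Finset.Icc (-(ω : ℤ)) (ω : ℤ), f (i + m) := by
  refine Finset.sum_nbij' (fun j => j - i) (fun m => i + m) ?_ ?_ ?_ ?_ ?_
  · intro j; simp only [Finset.mem_Icc]; omega
  · intro j; simp only [Finset.mem_Icc]; omega
  · intro j _; ring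
  · intro j _; ring
  · intro j _; congr 1; ring

/-- If `N` bounds the norm of the inverse of `e` and `N ‖P‖ ≤ 1 / 2`, the equation
`(e + P) z = y` has a solution of norm at most `2 N ‖y‖`, by the Neumann series. -/
theorem exists_perturb {E : Type*} [NormedAddCommGroup E] [NormedSpace ℂ E] [CompleteSpace E]
    (e : E ≃L[ℂ] E) (P : E →L[ℂ] E) (N : ℝ) (hN : ‖(e.symm : E →L[ℂ] E)‖ ≤ N)
    (hP : N * ‖P‖ ≤ 1 / 2) (y : E) :
    ∃ z, e z + P z = y ∧ ‖z‖ ≤ 2 * N * ‖y‖ := by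
  set S : E →L[ℂ] E := (e.symm : E →L[ℂ] E)
  have hS : ‖-(S.comp P)‖ < 1 := by
    rw [norm_neg]
    calc ‖S.comp P‖ ≤ ‖S‖ * ‖P‖ := S.opNorm_comp_le P
      _ ≤ N * ‖P‖ := by gcongr
      _ < 1 := by linarith
  obtain ⟨u, hu⟩ := isUnit_one_sub_of_norm_lt_one hS
  let z : E := (↑u⁻¹ : E →L[ℂ] E) (S y)
  have h1 : z + S (P z) = S y := by
    have h2 : (u : E →L[ℂ] E) z = S y := by
      change ((u : E →L[ℂ] E) * (↑u⁻¹ : E →L[ℂ] E)) (S y) = S y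
      rw [Units.mul_inv]; rfl
    rw [hu] at h2
    simpa using h2
  refine ⟨z, ?_, ?_⟩
  · have := congrArg e h1
    simpa [S] using this
  · have h3 : ‖z‖ ≤ N * ‖y‖ + N * ‖P‖ * ‖z‖ := by
      calc ‖z‖ = ‖S y - S (P z)‖ := by rw [← h1, add_sub_cancel_right]
        _ ≤ ‖S y‖ + ‖S (P z)‖ := norm_sub_le _ _
        _ ≤ N * ‖y‖ + N * (‖P‖ * ‖z‖) := by
          gcongr
          · exact S.le_of_opNorm_le hN y
          · exact (S.le_of_opNorm_le hN _).trans (mul_le_mul_of_nonneg_left (P.le_opNorm z)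
              ((norm_nonneg _).trans hN))
        _ = _ := by ring
    nlinarith [norm_nonneg z]

/-- Entries of the exponentially weighted matrix `w⁻¹ a w`, `w k = exp (-ε |k - n|)`, differ
from those of `a` by factors within `2 ε ω` of `1` inside the band. -/
theorem weight_bound (ω : ℕ) (ε : ℝ) (hε : 0 ≤ ε) (hω : ε * ω ≤ 1) (n i m : ℤ)
    (hm : m ∈ Finset.Icc (-(ω : ℤ)) (ω : ℤ)) :
    ‖((Real.exp (ε * |((i - n : ℤ) : ℝ)| - ε * |((i + m - n : ℤ) : ℝ)|) - 1 : ℝ) : ℂ)‖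
      ≤ 2 * (ε * ω) := by
  have hm' : |(m : ℝ)| ≤ ω := by
    rw [Finset.mem_Icc] at hm
    rw [abs_le]; exact_mod_cast hm
  have h1 : abs (ε * |((i - n : ℤ) : ℝ)| - ε * |((i + m - n : ℤ) : ℝ)|) ≤ ε * ω := by
    rw [← mul_sub, abs_mul, abs_of_nonneg hε]
    refine mul_le_mul_of_nonneg_left ((abs_abs_sub_abs_le_abs_sub _ _).trans ?_) hε
    have : ((i - n : ℤ) : ℝ) - ((i + m - n : ℤ) : ℝ) = -m := by push_cast; ring
    rwa [this, abs_neg]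
  rw [Complex.norm_real, Real.norm_eq_abs]
  exact (Real.abs_exp_sub_one_le (h1.trans hω)).trans (by linarith)

/-- The inverse of a banded operator on `ℓ^p(ℤ)` has columns `A⁻¹ eₙ` decaying exponentially away
from `n`, uniformly in `n`. With `D` the multiplication by `w k = exp (-ε |k - n|)`, the operator
`D⁻¹ A D` is a small banded perturbation of `A`, so `D⁻¹ A D z = eₙ` has a solution `z` bounded
independently of `n`, and `A⁻¹ eₙ = D z`. -/
theorem exists_decay (ω : ℕ) (a : ℤ → ℤ → ℂ) (C : ℝ) (hC : ∀ i j : ℤ, ‖a i j‖ ≤ C)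
    (p : ENNReal) [Fact (1 ≤ p)] (A : Lz p →L[ℂ] Lz p)
    (hA : ∀ x : Lz p, ∀ i : ℤ,
      A x i = ∑ j ∈ Finset.Icc (i - (ω : ℤ)) (i + (ω : ℤ)), a i j * x j)
    (hbij : Function.Bijective A) :
    ∃ M ε : ℝ, 0 < ε ∧ ∀ n : ℤ, ∃ x : Lz p, A x = lp.single p n 1 ∧
      ∀ k, ‖x k‖ ≤ M * Real.exp (-(ε * |((k - n : ℤ) : ℝ)|)) := by
  have hp0 : p ≠ 0 := (zero_lt_one.trans_le (Fact.out : 1 ≤ p)).ne'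
  have hC0 : 0 ≤ C := (norm_nonneg _).trans (hC 0 0)
  let e : Lz p ≃L[ℂ] Lz p := ContinuousLinearEquiv.ofBijective A
    (LinearMap.ker_eq_bot.2 hbij.1) (LinearMap.range_eq_top.2 hbij.2)
  have he : ∀ x, e x = A x := fun x => rfl
  set N : ℝ := ‖(e.symm : Lz p →L[ℂ] Lz p)‖ with hNdef
  have hN0 : 0 ≤ N := norm_nonneg _
  set b : ℕ := (Finset.Icc (-(ω : ℤ)) (ω : ℤ)).card
  set X : ℝ := N * (b * (C * (2 * ω)))
  have hX : 0 ≤ X := by positivity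
  -- small enough that `ε ω ≤ 1` and that the perturbation has norm at most `1 / (2 ‖A⁻¹‖)`
  set ε : ℝ := 1 / (1 + ω + 2 * X)
  have hden : 0 < 1 + (ω : ℝ) + 2 * X := by positivity
  have hε : 0 < ε := by positivity
  have hεω : ε * ω ≤ 1 := by
    change 1 / (1 + (ω : ℝ) + 2 * X) * ω ≤ 1
    rw [one_div_mul_eq_div, div_le_one hden]; linarith
  have hεX : ε * X ≤ 1 / 2 := by
    change 1 / (1 + (ω : ℝ) + 2 * X) * X ≤ 1 / 2
    rw [one_div_mul_eq_div, div_le_div_iff₀ hden two_pos]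
    have : (0 : ℝ) ≤ ω := Nat.cast_nonneg _
    linarith
  refine ⟨2 * N, ε, hε, fun n => ?_⟩
  have hT : ∀ m : ℤ, ∃ T : Lz p →L[ℂ] Lz p, m ∈ Finset.Icc (-(ω : ℤ)) (ω : ℤ) →
      ‖T‖ ≤ C * (2 * (ε * ω)) ∧ ∀ x i, T x i = (a i (i + m) *
        ((Real.exp (ε * |((i - n : ℤ) : ℝ)| - ε * |((i + m - n : ℤ) : ℝ)|) - 1 : ℝ) : ℂ))
          * x (i + m) := by
    intro m
    by_cases hm : m ∈ Finset.Icc (-(ω : ℤ)) (ω : ℤ)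
    · obtain ⟨T, hT⟩ := exists_diag p m (fun i => a i (i + m) *
        ((Real.exp (ε * |((i - n : ℤ) : ℝ)| - ε * |((i + m - n : ℤ) : ℝ)|) - 1 : ℝ) : ℂ))
        (C * (2 * (ε * ω))) (fun i => by
          rw [norm_mul]
          exact mul_le_mul (hC _ _) (weight_bound ω ε hε.le hεω n i m hm) (norm_nonneg _) hC0)
      exact ⟨T, fun _ => hT⟩
    · exact ⟨0, fun h => absurd h hm⟩
  choose T hT using hT
  let P : Lz p →L[ℂ] Lz p := ∑ m ∈ Finset.Icc (-(ω : ℤ)) (ω : ℤ), T m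
  have hPn : N * ‖P‖ ≤ 1 / 2 := by
    have : ‖P‖ ≤ b * (C * (2 * (ε * ω))) := by
      refine (norm_sum_le_of_le _ fun m hm => (hT m hm).1).trans ?_
      rw [Finset.sum_const, nsmul_eq_mul]
    calc N * ‖P‖ ≤ N * (b * (C * (2 * (ε * ω)))) := by gcongr
      _ = ε * X := by ring
      _ ≤ _ := hεX
  have hPa : ∀ x : Lz p, ∀ i, P x i = ∑ m ∈ Finset.Icc (-(ω : ℤ)) (ω : ℤ), (a i (i + m) *
        ((Real.exp (ε * |((i - n : ℤ) : ℝ)| - ε * |((i + m - n : ℤ) : ℝ)|) - 1 : ℝ) : ℂ))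
          * x (i + m) := by
    intro x i
    simp only [P]
    rw [_root_.sum_apply, lp.coeFn_sum, Finset.sum_apply]
    exact Finset.sum_congr rfl fun m hm => (hT m hm).2 x i
  obtain ⟨z, hz, hzn⟩ := exists_perturb e P N le_rfl hPn (lp.single p n 1)
  obtain ⟨D, -, hD⟩ := exists_diag p 0
    (fun k => ((Real.exp (-(ε * |((k - n : ℤ) : ℝ)|)) : ℝ) : ℂ)) 1 (fun i => by
      rw [Complex.norm_real, Real.norm_eq_abs, Real.abs_exp, Real.exp_le_one_iff]
      exact neg_nonpos.2 (by positivity))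
  refine ⟨D z, ?_, fun k => ?_⟩
  · ext i
    have hzi : A z i + P z i = (lp.single p n 1 : Lz p) i := by
      rw [← hz, lp.coeFn_add, Pi.add_apply, he]
    rw [hA, sum_Icc_shift ω i (fun j => a i j * z j), hPa, ← Finset.sum_add_distrib] at hzi
    rw [hA, sum_Icc_shift ω i (fun j => a i j * D z j)]
    have hw : ((Real.exp (-(ε * |((i - n : ℤ) : ℝ)|)) : ℝ) : ℂ) * (lp.single p n 1 : Lz p) i
        = (lp.single p n 1 : Lz p) i := by
      by_cases hin : i = n
      · subst hin; simp
      · rw [lp.single_apply_ne _ _ _ hin, mul_zero]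
    rw [← hw, ← hzi, Finset.mul_sum]
    refine Finset.sum_congr rfl fun m _ => ?_
    have hexp : ((Real.exp (-(ε * |((i + m - n : ℤ) : ℝ)|)) : ℝ) : ℂ)
        = ((Real.exp (-(ε * |((i - n : ℤ) : ℝ)|)) : ℝ) : ℂ) *
        ((Real.exp (ε * |((i - n : ℤ) : ℝ)| - ε * |((i + m - n : ℤ) : ℝ)|) : ℝ) : ℂ) := by
      rw [← Complex.ofReal_mul, ← Real.exp_add]
      congr 2; ring
    rw [hD, hexp, add_zero, Complex.ofReal_sub, Complex.ofReal_one]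
    ring
  · rw [hD, norm_mul, add_zero, Complex.norm_real, Real.norm_eq_abs, Real.abs_exp, mul_comm]
    gcongr
    refine (lp.norm_apply_le_norm hp0 z k).trans (hzn.trans_eq ?_)
    rw [lp.norm_single (pos_iff_ne_zero.2 hp0)]; simp

/-- The matrix `G k n = (A⁻¹ eₙ) k` is a two-sided inverse of `a` with exponential off-diagonal
decay. This is the only information about `ℓ^p` that has to be carried over to `ℓ^q`. -/
theorem exists_green (ω : ℕ) (a : ℤ → ℤ → ℂ) (C : ℝ) (hC : ∀ i j : ℤ, ‖a i j‖ ≤ C)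
    (p : ENNReal) [Fact (1 ≤ p)] (A : Lz p →L[ℂ] Lz p)
    (hA : ∀ x : Lz p, ∀ i : ℤ,
      A x i = ∑ j ∈ Finset.Icc (i - (ω : ℤ)) (i + (ω : ℤ)), a i j * x j)
    (hbij : Function.Bijective A) :
    ∃ (M ε : ℝ) (G : ℤ → ℤ → ℂ), 0 < ε ∧
      (∀ k n, ‖G k n‖ ≤ M * Real.exp (-(ε * |((k - n : ℤ) : ℝ)|))) ∧
      (∀ i n, ∑ j ∈ Finset.Icc (i - (ω : ℤ)) (i + (ω : ℤ)), a i j * G j n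
        = (Pi.single n 1 : ℤ → ℂ) i) ∧
      (∀ i n, ∑ m ∈ Finset.Icc (-(ω : ℤ)) (ω : ℤ), G i (n - m) * a (n - m) n
        = (Pi.single n 1 : ℤ → ℂ) i) := by
  obtain ⟨M, ε, hε, h⟩ := exists_decay ω a C hC p A hA hbij
  choose x hx hdec using h
  refine ⟨M, ε, fun k n => x n k, hε, fun k n => hdec n k, fun i n => ?_, fun i n => ?_⟩
  · rw [← hA, hx, lp.single_apply]
  · -- `A eₙ` is the finite combination `∑ a (n - m) n • eₙ₋ₘ`; apply `A⁻¹` to both sides.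
    have h1 : ∑ m ∈ Finset.Icc (-(ω : ℤ)) (ω : ℤ), a (n - m) n • x (n - m)
        = (lp.single p n 1 : Lz p) := by
      apply hbij.1
      rw [map_sum]
      ext k
      rw [lp.coeFn_sum, Finset.sum_apply, hA]
      have h2 : ∀ m, (A (a (n - m) n • x (n - m))) k = if m = n - k then a k n else 0 := by
        intro m
        rw [map_smul, hx, lp.coeFn_smul, Pi.smul_apply, smul_eq_mul, lp.single_apply]
        split_ifs with hm
        · subst hm; simp
        · rw [Pi.single_eq_of_ne (by omega), mul_zero]
      rw [Finset.sum_congr rfl fun m _ => h2 m, Finset.sum_ite_eq']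
      have h3 : ∀ j, a k j * (lp.single p n 1 : Lz p) j = if j = n then a k n else 0 := by
        intro j
        rw [lp.single_apply]
        split_ifs with hj
        · subst hj; simp
        · rw [Pi.single_eq_of_ne hj, mul_zero]
      rw [Finset.sum_congr rfl fun j _ => h3 j, Finset.sum_ite_eq']
      simp only [Finset.mem_Icc]
      congr 1
      apply propext
      constructor <;> intro h <;> omega
    have h4 := congrArg (fun y : Lz p => y i) h1
    simp only [lp.coeFn_sum, Finset.sum_apply, lp.coeFn_smul, Pi.smul_apply, smul_eq_mul,
      lp.single_apply] at h4
    rw [← h4]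
    exact Finset.sum_congr rfl fun m _ => mul_comm _ _

theorem summable_exp_abs (ε : ℝ) (hε : 0 < ε) :
    Summable fun m : ℤ => Real.exp (-(ε * |(m : ℝ)|)) := by
  have h : Summable fun n : ℕ => Real.exp (-(ε * n)) := by
    simpa [mul_comm] using Real.summable_exp_nat_mul_iff.2 (neg_lt_zero.2 hε)
  refine Summable.of_nat_of_neg ?_ ?_ <;> simpa using h

/-- invertibility of a band operator is independent of the
underlying `ℓ^p`-space. -/
theorem stmt16 (ω : ℕ) (a : ℤ → ℤ → ℂ)
    (hbd : ∃ C : ℝ, ∀ i j : ℤ, ‖a i j‖ ≤ C)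
    (hband : ∀ i j : ℤ, (ω : ℤ) < |i - j| → a i j = 0)
    (p q : ENNReal) [Fact (1 ≤ p)] [Fact (1 ≤ q)]
    (A : lp (fun _ : ℤ => ℂ) p →L[ℂ] lp (fun _ : ℤ => ℂ) p)
    (B : lp (fun _ : ℤ => ℂ) q →L[ℂ] lp (fun _ : ℤ => ℂ) q)
    (hA : ∀ x : lp (fun _ : ℤ => ℂ) p, ∀ i : ℤ,
      A x i = ∑ j ∈ Finset.Icc (i - (ω : ℤ)) (i + (ω : ℤ)), a i j * x j)
    (hB : ∀ x : lp (fun _ : ℤ => ℂ) q, ∀ i : ℤ,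
      B x i = ∑ j ∈ Finset.Icc (i - (ω : ℤ)) (i + (ω : ℤ)), a i j * x j)
    (hbij : Function.Bijective A) :
    Function.Bijective B := by
  obtain ⟨C, hC⟩ := hbd
  have hq0 : q ≠ 0 := (zero_lt_one.trans_le (Fact.out : 1 ≤ q)).ne'
  obtain ⟨M, ε, G, hε, hG, hright, hleft⟩ := exists_green ω a C hC p A hA hbij
  have hsum : ∀ i, Summable fun m : ℤ => M * Real.exp (-(ε * |((i - m : ℤ) : ℝ)|)) := fun i =>
    ((Equiv.subLeft i).summable_iff.2 (summable_exp_abs ε hε)).mul_left M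
  constructor
  · -- `B x = 0` gives `x = G (a x) = 0`; the double series converges absolutely as `x` is bounded.
    refine (injective_iff_map_eq_zero B).2 fun x hx => ?_
    ext i
    have hs : ∀ m : ℤ, Summable fun k : ℤ => G i k * a k (k + m) * x (k + m) := by
      intro m
      refine Summable.of_norm_bounded ((hsum i).mul_right (C * ‖x‖)) fun k => ?_
      rw [norm_mul, norm_mul, mul_assoc]
      have hC0 : 0 ≤ C := (norm_nonneg _).trans (hC 0 0)
      exact mul_le_mul (hG _ _) (mul_le_mul (hC _ _) (lp.norm_apply_le_norm hq0 _ _)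
        (norm_nonneg _) hC0) (by positivity) ((norm_nonneg _).trans (hG i k))
    have h1 : HasSum (fun k : ℤ => ∑ m ∈ Finset.Icc (-(ω : ℤ)) (ω : ℤ),
        G i k * a k (k + m) * x (k + m))
        (∑ m ∈ Finset.Icc (-(ω : ℤ)) (ω : ℤ), ∑' k, G i k * a k (k + m) * x (k + m)) :=
      hasSum_sum fun m _ => (hs m).hasSum
    have h2 : HasSum (fun n : ℤ => ∑ m ∈ Finset.Icc (-(ω : ℤ)) (ω : ℤ),
        G i (n - m) * a (n - m) n * x n)
        (∑ m ∈ Finset.Icc (-(ω : ℤ)) (ω : ℤ), ∑' k, G i k * a k (k + m) * x (k + m)) :=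
      hasSum_sum fun m _ => by
        have h := (Equiv.subRight m).hasSum_iff.2 (hs m).hasSum
        simpa [Function.comp_def] using h
    have h3 : (fun k : ℤ => ∑ m ∈ Finset.Icc (-(ω : ℤ)) (ω : ℤ),
        G i k * a k (k + m) * x (k + m)) = fun _ => 0 := by
      funext k
      have h := hB x k
      rw [hx, sum_Icc_shift ω k (fun j => a k j * x j)] at h
      simp only [mul_assoc]
      rw [← Finset.mul_sum, ← h]
      simp
    have h4 : (fun n : ℤ => ∑ m ∈ Finset.Icc (-(ω : ℤ)) (ω : ℤ),
        G i (n - m) * a (n - m) n * x n) = fun n => (Pi.single n 1 : ℤ → ℂ) i * x n := by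
      funext n
      rw [← Finset.sum_mul, hleft]
    rw [h3] at h1
    rw [h4, h1.unique hasSum_zero] at h2
    have h5 := hasSum_single (f := fun n => (Pi.single n 1 : ℤ → ℂ) i * x n) i
      (fun n hn => by rw [Pi.single_eq_of_ne hn.symm, zero_mul])
    simpa using h5.unique h2
  · -- `G` is the norm-convergent sum of its diagonals, hence acts on `ℓ^q`.
    intro y
    have hT : ∀ m : ℤ, ∃ T : Lz q →L[ℂ] Lz q, ‖T‖ ≤ M * Real.exp (-(ε * |(m : ℝ)|)) ∧
        ∀ x i, T x i = G i (i + m) * x (i + m) := fun m =>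
      exists_diag q m (fun i => G i (i + m)) _ fun i => by
        refine (hG i (i + m)).trans_eq ?_
        have : ((i - (i + m) : ℤ) : ℝ) = -m := by push_cast; ring
        rw [this, abs_neg]
    choose T hTn hT using hT
    have hTs : Summable fun m => T m y :=
      Summable.of_norm_bounded (((summable_exp_abs ε hε).mul_left M).mul_right ‖y‖)
        fun m => (T m).le_of_opNorm_le (hTn m) y
    have hev : ∀ k, HasSum (fun j => G k j * y j) ((∑' m, T m y : Lz q) k) := by
      intro k
      have h := hTs.hasSum.mapL (lp.evalCLM ℂ (fun _ : ℤ => ℂ) q k)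
      have h' : HasSum (fun m => G k (k + m) * y (k + m)) ((∑' m, T m y : Lz q) k) := by
        have h'' : (fun m => G k (k + m) * y (k + m)) =
            fun m => lp.evalCLM ℂ (fun _ : ℤ => ℂ) q k (T m y) :=
          funext fun m => (hT m y k).symm
        rw [h'']
        exact h
      exact (Equiv.addLeft k).hasSum_iff.1 h'
    refine ⟨∑' m, T m y, ?_⟩
    ext i
    rw [hB]
    have h1 := hasSum_sum (s := Finset.Icc (i - (ω : ℤ)) (i + (ω : ℤ)))
      fun k _ => (hev k).mul_left (a i k)
    have h2 : (fun j => ∑ k ∈ Finset.Icc (i - (ω : ℤ)) (i + (ω : ℤ)), a i k * (G k j * y j))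
        = fun j => (Pi.single j 1 : ℤ → ℂ) i * y j := by
      funext j
      simp only [← mul_assoc]
      rw [← Finset.sum_mul, hright]
    rw [h2] at h1
    have h5 := hasSum_single (f := fun n => (Pi.single n 1 : ℤ → ℂ) i * y n) i
      (fun n hn => by rw [Pi.single_eq_of_ne hn.symm, zero_mul])
    simpa using h1.unique h5
end
end

section
/- Let v : ℤ → ℝ be the 3-periodic potential with v(0) = 2, v(1) = 1/2, v(2) = 1/2 (extended by v(n+3) = v(n)), and let H be the discrete Schrödinger operator on ℓ²(ℤ) with potential v. Then H is bijective, but the finite section method is not applicable to H; i.e. the finite sections (Hₙ) are not stable: for all n₀ ∈ ℕ and C > 0 there exists n ≥ n₀ such that Hₙ is not invertible or ‖Hₙ⁻¹‖ > C. In particular, H is not FSM-simple. -/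
/-!
Since `v` is `3`-periodic, Cayley–Hamilton applied to the Floquet symbol of `H` gives
`Δ(H) = S + S⁻¹`, where `S` is the shift by `3` and `Δ` is the discriminant (the trace of the
monodromy matrix), here `Δ(E) = E³ - 3E² - (3/4)E + 5/2`. Hence
`H (H² - 3H - 3/4) = S + S⁻¹ - 5/2`. The right-hand side is invertible because
`‖S + S⁻¹‖ ≤ 2 < 5/2`, and the two factors on the left commute, so `H` is invertible
(`isUnit_of_discriminant`, `discriminant_identity`).

For `n = 3m + 1` the diagonal of the section starts with `v (-n) = 1/2, 2, 1/2, …`. The solution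
of the three-term recurrence with Dirichlet condition at `-n - 1` is then the *decaying* sequence
`1, -1/2, 0, 1/2, -1/4, 0, 1/4, …` (`edgeSol`). It satisfies every row of the section except the
last one, where it leaves the defect `-(1/2)^(2m+1)` (`schFinSec_mulVec_edgeSol`). As the sequence has norm
at least `1`, any inverse of the section has norm at least `2^(2m+1)`
(`le_norm_inv_schFinSec`).
-/

noncomputable section

open Matrix

/-- The `n`-th (two-sided) finite section of the discrete Schrödinger operator with
potential `v`. -/
def schFinSec (v : ℤ → ℝ) (n : ℕ) : Matrix (Fin (2 * n + 1)) (Fin (2 * n + 1)) ℂ :=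
  Matrix.of fun i j =>
    if (i : ℤ) = (j : ℤ) then ((v ((i : ℤ) - (n : ℤ))) : ℂ)
    else if (i : ℤ) = (j : ℤ) + 1 ∨ (j : ℤ) = (i : ℤ) + 1 then 1 else 0

/-- Translation by `k` on `ℓ²(ℤ)`: `(shiftL2 k x) n = x (n + k)`. -/
def shiftL2 (k : ℤ) : lp (fun _ : ℤ => ℂ) 2 →L[ℂ] lp (fun _ : ℤ => ℂ) 2 :=
  LinearMap.mkContinuous
    { toFun := fun x => ⟨fun n => x (n + k), by
        have hx := lp.memℓp x
        have h2 : 0 < (2 : ENNReal).toReal := by norm_num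
        exact (memℓp_gen_iff h2).2
          (((memℓp_gen_iff h2).1 hx).comp_injective (add_left_injective k))⟩
      map_add' := fun x y => by ext n; rfl
      map_smul' := fun c x => by ext n; simp } 1 (fun x => by
      have h2 : 0 < (2 : ENNReal).toReal := by norm_num
      rw [one_mul]
      refine le_of_eq ?_
      rw [lp.norm_eq_tsum_rpow h2, lp.norm_eq_tsum_rpow h2]
      congr 1
      exact (Equiv.addRight k).tsum_eq (fun n => ‖x n‖ ^ (2 : ENNReal).toReal))

theorem shiftL2_apply (k : ℤ) (x : lp (fun _ : ℤ => ℂ) 2) (n : ℤ) :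
    shiftL2 k x n = x (n + k) := rfl

theorem norm_shiftL2_le (k : ℤ) : ‖shiftL2 k‖ ≤ 1 :=
  LinearMap.mkContinuous_norm_le _ zero_le_one _

theorem potential_window (v : ℤ → ℝ) (hper : ∀ n : ℤ, v (n + 3) = v n)
    (h0 : v 0 = 2) (h1 : v 1 = 1 / 2) (h2 : v 2 = 1 / 2) (k : ℤ) :
    v (3 * k) = 2 ∧ v (3 * k + 1) = 1 / 2 ∧ v (3 * k + 2) = 1 / 2 := by
  have hp : Function.Periodic v 3 := hper
  have key : ∀ r : ℤ, v (3 * k + r) = v r := fun r => by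
    have := hp.zsmul k r
    rw [show 3 * k + r = r + k • (3 : ℤ) by simp; ring]
    exact this
  refine ⟨?_, ?_, ?_⟩
  · simpa [h0] using key 0
  · rw [key, h1]
  · rw [key, h2]

/-- The discriminant identity `H (H² - 3H - 3/4) = S + S⁻¹ - 5/2`. -/
theorem discriminant_identity (v : ℤ → ℝ)
    (hper : ∀ n : ℤ, v (n + 3) = v n)
    (h0 : v 0 = 2) (h1 : v 1 = 1 / 2) (h2 : v 2 = 1 / 2)
    (H : lp (fun _ : ℤ => ℂ) 2 →L[ℂ] lp (fun _ : ℤ => ℂ) 2)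
    (hH : ∀ x : lp (fun _ : ℤ => ℂ) 2, ∀ n : ℤ,
      H x n = x (n + 1) + x (n - 1) + (v n : ℂ) * x n) :
    H * (H * H - (3 : ℂ) • H - (3 / 4 : ℂ) • 1) =
      shiftL2 3 + shiftL2 (-3) - (5 / 2 : ℂ) • 1 := by
  ext x n
  have e : (H * (H * H - (3 : ℂ) • H - (3 / 4 : ℂ) • 1)) x =
      H (H (H x)) - (3 : ℂ) • H (H x) - (3 / 4 : ℂ) • H x := by
    simp [map_sub]
  have e' : (shiftL2 3 + shiftL2 (-3) - (5 / 2 : ℂ) • 1) x =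
      shiftL2 3 x + shiftL2 (-3) x - (5 / 2 : ℂ) • x := by
    simp
  rw [e, e']
  simp only [lp.coeFn_sub, lp.coeFn_add, lp.coeFn_smul, Pi.sub_apply, Pi.add_apply,
    Pi.smul_apply, smul_eq_mul, shiftL2_apply, hH]
  have a1 : v (n - 1) = v (n + 2) := by rw [← hper (n - 1)]; congr 1; ring
  have a2 : v (n - 1 - 1) = v (n + 1) := by rw [← hper (n - 1 - 1)]; congr 1; ring
  have a3 : n + 1 + 1 = n + 2 := by ring
  have a4 : n + 1 - 1 = n := by ring
  have a5 : n - 1 + 1 = n := by ring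
  have a6 : n + 2 + 1 = n + 3 := by ring
  have a7 : n + 2 - 1 = n + 1 := by ring
  have a8 : n - 1 - 1 + 1 = n - 1 := by ring
  have a9 : n - 1 - 1 - 1 = n + -3 := by ring
  simp only [a3, a4, a5, a6, a7, a8, a9, a2, a1]
  have hw : (v n = 2 ∧ v (n + 1) = 1 / 2 ∧ v (n + 2) = 1 / 2) ∨
      (v n = 1 / 2 ∧ v (n + 1) = 1 / 2 ∧ v (n + 2) = 2) ∨
      (v n = 1 / 2 ∧ v (n + 1) = 2 ∧ v (n + 2) = 1 / 2) := by
    have W := potential_window v hper h0 h1 h2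
    obtain ⟨k, hk | hk | hk⟩ : ∃ k : ℤ, n = 3 * k ∨ n = 3 * k + 1 ∨ n = 3 * k + 2 :=
      ⟨n / 3, by omega⟩
    · left
      rw [hk]
      exact W k
    · right; left
      refine ⟨hk ▸ (W k).2.1, ?_, ?_⟩
      · rw [show n + 1 = 3 * k + 2 by omega]; exact (W k).2.2
      · rw [show n + 2 = 3 * (k + 1) by omega]; exact (W (k + 1)).1
    · right; right
      refine ⟨hk ▸ (W k).2.2, ?_, ?_⟩
      · rw [show n + 1 = 3 * (k + 1) by omega]; exact (W (k + 1)).1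
      · rw [show n + 2 = 3 * (k + 1) + 1 by omega]; exact (W (k + 1)).2.1
  rcases hw with ⟨b0, b1, b2⟩ | ⟨b0, b1, b2⟩ | ⟨b0, b1, b2⟩ <;>
  · rw [b0, b1, b2]
    push_cast
    ring

/-- A Neumann series inverts `S + S⁻¹ - 5/2`, and a factor of a unit that commutes with its
cofactor is a unit. -/
theorem isUnit_of_discriminant
    (H : lp (fun _ : ℤ => ℂ) 2 →L[ℂ] lp (fun _ : ℤ => ℂ) 2)
    (hid : H * (H * H - (3 : ℂ) • H - (3 / 4 : ℂ) • 1) =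
      shiftL2 3 + shiftL2 (-3) - (5 / 2 : ℂ) • 1) : IsUnit H := by
  have hcomm : Commute H (H * H - (3 : ℂ) • H - (3 / 4 : ℂ) • 1) := by
    have hr := Commute.refl H
    exact ((hr.mul_right hr).sub_right (hr.smul_right _)).sub_right
      ((Commute.one_right H).smul_right _)
  refine (hcomm.isUnit_mul_iff.1 ?_).1
  rw [hid]
  have hn : ‖(2 / 5 : ℂ) • (shiftL2 3 + shiftL2 (-3))‖ < 1 := by
    have h := norm_add_le (shiftL2 3) (shiftL2 (-3))
    have := norm_shiftL2_le 3
    have := norm_shiftL2_le (-3)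
    rw [norm_smul]
    norm_num
    linarith
  have hu := (isUnit_one_sub_of_norm_lt_one hn).neg
  have hs := hu.smul (Units.mk0 (5 / 2 : ℂ) (by norm_num))
  convert hs using 1
  rw [Units.smul_def, Units.val_mk0, neg_sub, smul_sub, smul_smul]
  norm_num

/-- The decaying half-line solution `1, -1/2, 0, 1/2, -1/4, 0, …` for the diagonal
`1/2, 2, 1/2, 1/2, 2, 1/2, …`. -/
def edgeSol (j : ℕ) : ℂ :=
  if j % 3 = 0 then (1 / 2) ^ (j / 3) else if j % 3 = 1 then -(1 / 2) * (1 / 2) ^ (j / 3) else 0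

theorem edgeSol_three (k : ℕ) : edgeSol (3 * k) = (1 / 2) ^ k ∧
    edgeSol (3 * k + 1) = -(1 / 2) * (1 / 2) ^ k ∧ edgeSol (3 * k + 2) = 0 := by
  refine ⟨?_, ?_, ?_⟩
  · simp [edgeSol]
  · rw [edgeSol, if_neg (by omega), if_pos (by omega), show (3 * k + 1) / 3 = k by omega]
  · rw [edgeSol, if_neg (by omega), if_neg (by omega)]

/-- Row `i` of a finite section applied to the restriction of a sequence `w`. -/
theorem schFinSec_mulVec (v : ℤ → ℝ) (n : ℕ) (w : ℕ → ℂ) (i : Fin (2 * n + 1)) :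
    (schFinSec v n *ᵥ fun j => w j) i =
      (v ((i : ℤ) - n) : ℂ) * w i + (if 0 < (i : ℕ) then w (i - 1) else 0) +
        (if (i : ℕ) + 1 < 2 * n + 1 then w (i + 1) else 0) := by
  have hi := i.isLt
  have hrow : ∀ j : Fin (2 * n + 1), schFinSec v n i j * w j =
      (if (i : ℕ) = j then (v ((i : ℤ) - n) : ℂ) * w j else 0) +
      (if (i : ℕ) - 1 = j then (if 0 < (i : ℕ) then w j else 0) else 0) +
      (if (i : ℕ) + 1 = j then w j else 0) := by
    intro j
    simp only [schFinSec, Matrix.of_apply]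
    split_ifs <;> first | omega | simp
  simp only [Matrix.mulVec, dotProduct, hrow]
  rw [Fin.sum_univ_eq_sum_range (fun j : ℕ =>
      (if (i : ℕ) = j then (v ((i : ℤ) - n) : ℂ) * w j else 0) +
      (if (i : ℕ) - 1 = j then (if 0 < (i : ℕ) then w j else 0) else 0) +
      (if (i : ℕ) + 1 = j then w j else 0))]
  rw [Finset.sum_add_distrib, Finset.sum_add_distrib, Finset.sum_ite_eq, Finset.sum_ite_eq,
    Finset.sum_ite_eq]
  simp only [Finset.mem_range]
  rw [if_pos hi, if_pos (show (i : ℕ) - 1 < 2 * n + 1 by omega)]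

/-- For `n = 3m + 1` the sequence `edgeSol` solves every row of the section but the last. -/
theorem schFinSec_mulVec_edgeSol (v : ℤ → ℝ)
    (hper : ∀ n : ℤ, v (n + 3) = v n)
    (h0 : v 0 = 2) (h1 : v 1 = 1 / 2) (h2 : v 2 = 1 / 2) (m : ℕ) :
    (schFinSec v (3 * m + 1) *ᵥ fun j => edgeSol j) =
      Pi.single (Fin.last (2 * (3 * m + 1))) (-(1 / 2) ^ (2 * m + 1)) := by
  ext i
  rw [schFinSec_mulVec]
  have hi := i.isLt
  have W := potential_window v hper h0 h1 h2
  have hlast : i = Fin.last (2 * (3 * m + 1)) ↔ (i : ℕ) = 3 * (2 * m) + 2 := by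
    rw [Fin.ext_iff, Fin.val_last]; omega
  simp only [Pi.single_apply, hlast]
  obtain ⟨k, hk | hk | hk⟩ : ∃ k : ℕ, (i : ℕ) = 3 * k ∨ (i : ℕ) = 3 * k + 1 ∨
      (i : ℕ) = 3 * k + 2 := ⟨(i : ℕ) / 3, by omega⟩
  · have hv : v ((i : ℤ) - (3 * m + 1 : ℕ)) = 1 / 2 := by
      rw [show (i : ℤ) - (3 * m + 1 : ℕ) = 3 * ((k : ℤ) - m - 1) + 2 by push_cast; omega]
      exact (W _).2.2
    rw [if_neg (show ¬ (i : ℕ) = 3 * (2 * m) + 2 by omega), hv,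
      if_pos (show (i : ℕ) + 1 < 2 * (3 * m + 1) + 1 by omega), hk]
    have hprev : (if 0 < 3 * k then edgeSol (3 * k - 1) else 0) = 0 := by
      split_ifs with h
      · rw [show 3 * k - 1 = 3 * (k - 1) + 2 by omega]; exact (edgeSol_three _).2.2
      · rfl
    rw [hprev, (edgeSol_three k).1, (edgeSol_three k).2.1]
    push_cast
    ring
  · have hv : v ((i : ℤ) - (3 * m + 1 : ℕ)) = 2 := by
      rw [show (i : ℤ) - (3 * m + 1 : ℕ) = 3 * ((k : ℤ) - m) by push_cast; omega]
      exact (W _).1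
    rw [if_neg (show ¬ (i : ℕ) = 3 * (2 * m) + 2 by omega), hv,
      if_pos (show (i : ℕ) + 1 < 2 * (3 * m + 1) + 1 by omega), hk,
      if_pos (show 0 < 3 * k + 1 by omega), show 3 * k + 1 - 1 = 3 * k by omega,
      show 3 * k + 1 + 1 = 3 * k + 2 by omega, (edgeSol_three k).1, (edgeSol_three k).2.1,
      (edgeSol_three k).2.2]
    push_cast
    ring
  · rw [hk, (edgeSol_three k).2.2, mul_zero, if_pos (show 0 < 3 * k + 2 by omega),
      show 3 * k + 2 - 1 = 3 * k + 1 by omega, show 3 * k + 2 + 1 = 3 * (k + 1) by omega,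
      (edgeSol_three k).2.1, (edgeSol_three (k + 1)).1]
    by_cases hkm : k = 2 * m
    · subst hkm
      rw [if_neg (by omega), if_pos rfl]
      ring
    · rw [if_pos (by omega), if_neg (by omega)]
      ring

theorem le_norm_inv_schFinSec (v : ℤ → ℝ)
    (hper : ∀ n : ℤ, v (n + 3) = v n)
    (h0 : v 0 = 2) (h1 : v 1 = 1 / 2) (h2 : v 2 = 1 / 2) (m : ℕ)
    (hU : IsUnit (schFinSec v (3 * m + 1))) :
    (2 : ℝ) ^ (2 * m + 1) ≤
      ‖Matrix.toEuclideanCLM (𝕜 := ℂ) ((schFinSec v (3 * m + 1))⁻¹)‖ := by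
  set A := schFinSec v (3 * m + 1) with hA
  set T := Matrix.toEuclideanCLM (𝕜 := ℂ) A⁻¹
  set x : Fin (2 * (3 * m + 1) + 1) → ℂ := fun j => edgeSol j with hx
  have hAx : A *ᵥ x = _ := schFinSec_mulVec_edgeSol v hper h0 h1 h2 m
  have hT : T (WithLp.toLp 2 (A *ᵥ x)) = WithLp.toLp 2 x := by
    rw [Matrix.toEuclideanCLM_toLp, Matrix.mulVec_mulVec,
      Matrix.nonsing_inv_mul _ ((Matrix.isUnit_iff_isUnit_det A).1 hU), Matrix.one_mulVec]
  have hle := T.le_opNorm (WithLp.toLp 2 (A *ᵥ x))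
  have hx1 : 1 ≤ ‖WithLp.toLp 2 x‖ := by
    have := PiLp.norm_apply_le (WithLp.toLp 2 x) 0
    simpa [hx, edgeSol] using this
  have hn : ‖WithLp.toLp 2 (A *ᵥ x)‖ = (1 / 2 : ℝ) ^ (2 * m + 1) := by
    rw [hAx, PiLp.toLp_single, PiLp.norm_single]
    simp
  rw [hT, hn, one_div, inv_pow, ← div_eq_mul_inv, le_div_iff₀ (by positivity)] at hle
  nlinarith [pow_pos (show (0 : ℝ) < 2 by norm_num) (2 * m + 1)]

/-- the `3`-periodic Schrödinger operator with potential repeating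
`(2, 1/2, 1/2)` is bijective, but its finite sections are not stable; in
particular, this operator is not FSM-simple. -/
theorem stmt17 (v : ℤ → ℝ)
    (hper : ∀ n : ℤ, v (n + 3) = v n)
    (h0 : v 0 = 2) (h1 : v 1 = 1 / 2) (h2 : v 2 = 1 / 2)
    (H : lp (fun _ : ℤ => ℂ) 2 →L[ℂ] lp (fun _ : ℤ => ℂ) 2)
    (hH : ∀ x : lp (fun _ : ℤ => ℂ) 2, ∀ n : ℤ,
      H x n = x (n + 1) + x (n - 1) + (v n : ℂ) * x n) :
    Function.Bijective H ∧
      ∀ n₀ : ℕ, ∀ C : ℝ, 0 < C → ∃ n : ℕ, n₀ ≤ n ∧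
        (¬ IsUnit (schFinSec v n) ∨
          C < ‖Matrix.toEuclideanCLM (𝕜 := ℂ) ((schFinSec v n)⁻¹)‖) := by
  refine ⟨ContinuousLinearMap.isUnit_iff_bijective.1
    (isUnit_of_discriminant H (discriminant_identity v hper h0 h1 h2 H hH)), ?_⟩
  intro n₀ C _
  obtain ⟨M, hM⟩ := pow_unbounded_of_one_lt C (one_lt_two (α := ℝ))
  refine ⟨3 * (n₀ + M) + 1, by omega, ?_⟩
  by_cases hU : IsUnit (schFinSec v (3 * (n₀ + M) + 1))
  · right
    refine lt_of_lt_of_le (hM.trans_le ?_)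
      (le_norm_inv_schFinSec v hper h0 h1 h2 (n₀ + M) hU)
    exact pow_le_pow_right₀ one_le_two (by omega)
  · exact Or.inl hU
end
end
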